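/- arXiv:math/0603284 — 2 statements merged into one kernel-verified Lean document; each statement's English description precedes it below -/
import Mathlib

section
/- Let (Ω,𝔉,P) be a probability space, (𝔉_t)_{t=0}^T a filtration of P-complete sub-σ-algebras, and (Π_t)_{t=0}^T a bid-ask process with solvency cones K_t(ω)=K(Π_t(ω)). Then the robust no-arbitrage condition NA^r holds if and only if there exists an ℝ^d-valued P-martingale Z=(Z_t)_{t=0}^T adapted to (𝔉_t) such that Z_t(ω) ∈ ri K_t*(ω) for a.e. ω and every t=0,…,T (a strictly consistent price process). -/
open MeasureTheory Set

/-- A bid-ask matrix: positive entries, ones on the diagonal, and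
`π^{ij} ≤ π^{ik} π^{kj}`. -/
def IsBidAskMatrix {d : ℕ} (M : Matrix (Fin d) (Fin d) ℝ) : Prop :=
  (∀ i j, 0 < M i j) ∧ (∀ i, M i i = 1) ∧ ∀ i j k, M i j ≤ M i k * M k j

/-- The smallest closed convex cone containing a set `S ⊆ ℝ^d`. -/
def generatedClosedCone {d : ℕ} (S : Set (Fin d → ℝ)) : Set (Fin d → ℝ) :=
  ⋂₀ {C | S ⊆ C ∧ IsClosed C ∧ Convex ℝ C ∧ ∀ x ∈ C, ∀ c : ℝ, 0 ≤ c → c • x ∈ C}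

/-- The solvency cone `K(Π)`: the closed convex cone generated by the standard
basis vectors `e_i` and the vectors `π^{ij} e_i − e_j`. -/
def solvencyCone {d : ℕ} (M : Matrix (Fin d) (Fin d) ℝ) : Set (Fin d → ℝ) :=
  generatedClosedCone
    ((Set.range fun i : Fin d => (Pi.single i 1 : Fin d → ℝ)) ∪
      {v | ∃ i j : Fin d, v = M i j • (Pi.single i 1 : Fin d → ℝ) - Pi.single j 1})

/-- The dual cone `K* = {w : ⟨x,w⟩ ≥ 0 for all x ∈ K}`. -/
def dualCone' {d : ℕ} (K : Set (Fin d → ℝ)) : Set (Fin d → ℝ) :=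
  {w | ∀ x ∈ K, 0 ≤ ∑ i, x i * w i}

/-- `ξ ∈ L⁰(G, ℋ)`: `ξ` is `ℋ`-measurable and `ξ(ω) ∈ G(ω)` for a.e. `ω`. -/
def MemL0 {Ω : Type*} {d : ℕ} {m : MeasurableSpace Ω} (P : Measure Ω)
    (H : MeasurableSpace Ω) (G : Ω → Set (Fin d → ℝ)) (ξ : Ω → Fin d → ℝ) : Prop :=
  Measurable[H] ξ ∧ ∀ᵐ ω ∂P, ξ ω ∈ G ω

/-- `x ∈ A_T(Π) = Σ_{t=0}^T L⁰(−K_t, 𝔉_t)`: the attainable terminal portfolios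
of self-financing strategies for the bid-ask process `Π`. -/
def MemAttainable {Ω : Type*} {d T : ℕ} {m : MeasurableSpace Ω} (P : Measure Ω)
    (ℱ : Filtration (Fin (T + 1)) m)
    (Pi_ : Fin (T + 1) → Ω → Matrix (Fin d) (Fin d) ℝ) (x : Ω → Fin d → ℝ) : Prop :=
  ∃ xs : Fin (T + 1) → Ω → Fin d → ℝ,
    (∀ t, MemL0 P (ℱ t) (fun ω => -(solvencyCone (Pi_ t ω))) (xs t)) ∧
    ∀ ω, (∑ t, xs t ω) = x ω

/-- The robust no-arbitrage condition NAʳ for a bid-ask process `Π`: there is a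
bid-ask process `Π̃` whose bid-ask intervals lie a.s. in the relative interiors
of those of `Π`, and which admits no arbitrage:
`A_T(Π̃) ∩ L⁰(ℝ₊^d, 𝔉_T) = {0}`. -/
def RobustNoArbitrage {Ω : Type*} {d T : ℕ} {m : MeasurableSpace Ω} (P : Measure Ω)
    (ℱ : Filtration (Fin (T + 1)) m)
    (Pi_ : Fin (T + 1) → Ω → Matrix (Fin d) (Fin d) ℝ) : Prop :=
  ∃ Pi' : Fin (T + 1) → Ω → Matrix (Fin d) (Fin d) ℝ,
    (∀ t i j, Measurable[ℱ t] fun ω => Pi' t ω i j) ∧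
    (∀ t ω, IsBidAskMatrix (Pi' t ω)) ∧
    (∀ t i j, ∀ᵐ ω ∂P,
      Icc (1 / Pi' t ω j i) (Pi' t ω i j) ⊆
        intrinsicInterior ℝ (Icc (1 / Pi_ t ω j i) (Pi_ t ω i j))) ∧
    ∀ x : Ω → Fin d → ℝ, MemAttainable P ℱ Pi' x →
      MemL0 P (ℱ (Fin.last T)) (fun _ => {v | ∀ i, 0 ≤ v i}) x →
      ∀ᵐ ω ∂P, x ω = 0

/-!
If `Z` is a strictly consistent price process, the frictionless exchange rates `Z j / Z i` lie in
the relative interiors of the bid-ask intervals. They admit no arbitrage: a nonnegative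
attainable portfolio is a sum of trades `ξ t` with `⟨ξ t, Z t⟩ ≤ 0`, and conditioning backwards in
time shows that its value at the prices `Z T` vanishes.

Conversely, let `N` be an arbitrage-free process with smaller bid-ask intervals, and trade at the
rates `Q` halfway between `N` and the given process `M`. An exchange at `Q` costs strictly more than
at `N` unless it is frictionless under `M`, so exchanges at `Q` whose net cost is zero are all
frictionless. Frictionless exchanges are reversible, which makes the cone of attainable portfolios
closed under a.e. convergence: amounts escaping to infinity are normalized, and the resulting null
combination is subtracted. The cone is therefore closed in `L²`, where the Kreps–Yan
argument (Hahn–Banach separation and exhaustion) gives a strictly positive `ζ` nonnegative on the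
price vectors of all exchanges. The prices `Z t = 𝔼[ζ | ℱ t]` are consistent with `Q`, hence
strictly consistent with `M`.
-/

open Filter Topology
open scoped ENNReal

/-! ### Measurable subsequences -/

theorem measurable_eval_countable {Ω α κ : Type*} {_ : MeasurableSpace Ω} [MeasurableSpace α]
    [Countable κ] [MeasurableSpace κ] [MeasurableSingletonClass κ] {f : κ → Ω → α} {N : Ω → κ}
    (hf : ∀ n, Measurable (f n)) (hN : Measurable N) : Measurable fun ω => f (N ω) ω :=
  (measurable_from_prod_countable_left (f := fun p : Ω × κ => f p.2 p.1) hf).comp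
    (measurable_id.prodMk hN)

theorem exists_measurable_subseq_tendsto_limsup {Ω α : Type*} {_ : MeasurableSpace Ω}
    [CompleteLinearOrder α] [TopologicalSpace α] [OrderTopology α] [SecondCountableTopology α]
    [MeasurableSpace α] [BorelSpace α] {f : ℕ → Ω → α} (hf : ∀ n, Measurable (f n)) :
    ∃ N : ℕ → Ω → ℕ, (∀ k, Measurable (N k)) ∧ (∀ k ω, k ≤ N k ω) ∧
      ∀ ω, Tendsto (fun k => f (N k ω) ω) atTop (𝓝 (limsup (fun n => f n ω) atTop)) := by
  classical
  let _ := TopologicalSpace.metrizableSpaceMetric α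
  set L : Ω → α := fun ω => limsup (fun n => f n ω) atTop
  have hL : Measurable L := Measurable.limsup hf
  have hclose (k : ℕ) (ω : Ω) : ∃ n, k ≤ n ∧ dist (f n ω) (L ω) < 1 / ((k : ℝ) + 1) :=
    frequently_atTop.1 ((MapClusterPt.limsup (u := fun n => f n ω)).frequently
      (Metric.ball_mem_nhds _ Nat.one_div_pos_of_nat)) k
  refine ⟨fun k ω => Nat.find (hclose k ω), fun k => measurable_find _ fun n => ?_,
    fun k ω => (Nat.find_spec (hclose k ω)).1, fun ω => ?_⟩
  · exact (MeasurableSet.const _).inter (measurableSet_lt ((hf n).dist hL) measurable_const)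
  · exact tendsto_iff_dist_tendsto_zero.2 (squeeze_zero (fun _ => dist_nonneg)
      (fun k => (Nat.find_spec (hclose k ω)).2.le) tendsto_one_div_add_atTop_nhds_zero_nat)

open Classical in
/-- The sign of an infinite extended real, and `0` on finite ones. -/
noncomputable def signAtInfinity (a : EReal) : ℝ :=
  if a = ⊤ then 1 else if a = ⊥ then -1 else 0

theorem measurable_signAtInfinity : Measurable signAtInfinity :=
  Measurable.ite (measurableSet_singleton _) measurable_const
    (Measurable.ite (measurableSet_singleton _) measurable_const measurable_const)

theorem signAtInfinity_nonneg {a : EReal} (ha : 0 ≤ a) : 0 ≤ signAtInfinity a := by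
  have : a ≠ ⊥ := (EReal.bot_lt_zero.trans_le ha).ne'
  simp only [signAtInfinity, this, if_false]
  split_ifs <;> norm_num

section SignAtInfinity

variable {u : ℕ → ℝ} {a : EReal} (h : Tendsto (fun n => (u n : EReal)) atTop (𝓝 a))
include h

theorem tendsto_signAtInfinity_sq_mul_abs_inv :
    Tendsto (fun n => signAtInfinity a ^ 2 * |u n|⁻¹) atTop (𝓝 0) := by
  induction a with
  | bot =>
    simpa [signAtInfinity, Function.comp_def, Pi.inv_def] using
      (tendsto_abs_atBot_atTop.comp (EReal.tendsto_coe_nhds_bot_iff.1 h)).inv_tendsto_atTop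
  | coe r => simp [signAtInfinity]
  | top =>
    simpa [signAtInfinity, Function.comp_def, Pi.inv_def] using
      (tendsto_abs_atTop_atTop.comp (EReal.tendsto_coe_nhds_top_iff.1 h)).inv_tendsto_atTop

theorem tendsto_signAtInfinity_sq_mul_abs_inv_mul :
    Tendsto (fun n => signAtInfinity a ^ 2 * |u n|⁻¹ * u n) atTop (𝓝 (signAtInfinity a)) := by
  refine tendsto_const_nhds.congr' ?_
  induction a with
  | bot =>
    filter_upwards [(EReal.tendsto_coe_nhds_bot_iff.1 h).eventually_lt_atBot 0] with n hn
    simp [signAtInfinity, abs_of_neg hn, inv_neg, hn.ne]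
  | coe r => simp [signAtInfinity]
  | top =>
    filter_upwards [(EReal.tendsto_coe_nhds_top_iff.1 h).eventually_gt_atTop 0] with n hn
    simp [signAtInfinity, abs_of_pos hn, hn.ne']

theorem tendsto_one_sub_signAtInfinity_sq_mul :
    Tendsto (fun n => (1 - signAtInfinity a ^ 2) * u n) atTop (𝓝 a.toReal) := by
  induction a with
  | bot => simp [signAtInfinity]
  | coe r => simpa [signAtInfinity] using EReal.tendsto_coe.1 h
  | top => simp [signAtInfinity]

end SignAtInfinity

/-! ### Cones of random vectors with measurable coefficients -/

/-- A finite family of random vectors `vec k` in `E`, each to be held in a real amount known at the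
information level `info k`. The amounts are free in sign, except that of `vec k` has to be
nonnegative on the event `oneSided k`. The information levels form a chain. -/
structure ConicFamily {Ω : Type*} (m : MeasurableSpace Ω) (ι E : Type*) where
  info : ι → MeasurableSpace Ω
  info_le : ∀ k, info k ≤ m
  info_total : ∀ k l, info k ≤ info l ∨ info l ≤ info k
  vec : ι → Ω → E
  oneSided : ι → Set Ω
  measurableSet_oneSided : ∀ k, MeasurableSet[info k] (oneSided k)

namespace ConicFamily

variable {Ω ι E : Type*} {m : MeasurableSpace Ω}

/-- The amounts allowed in a `ConicFamily`. -/
def IsAdmissible (G : ConicFamily m ι E) (c : ι → Ω → ℝ) : Prop :=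
  (∀ k, Measurable[G.info k] (c k)) ∧ ∀ k, ∀ ω ∈ G.oneSided k, 0 ≤ c k ω

variable {G : ConicFamily m ι E} {P : Measure Ω} {c c' : ι → Ω → ℝ}

theorem IsAdmissible.add (hc : G.IsAdmissible c) (hc' : G.IsAdmissible c') :
    G.IsAdmissible (c + c') :=
  ⟨fun k => (hc.1 k).add (hc'.1 k), fun k ω hω => add_nonneg (hc.2 k ω hω) (hc'.2 k ω hω)⟩

theorem isAdmissible_single [DecidableEq ι] {a : ι} {l : Ω → ℝ} (hl : Measurable[G.info a] l)
    (hl0 : ∀ ω ∈ G.oneSided a, 0 ≤ l ω) : G.IsAdmissible (Pi.single a l) := by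
  refine ⟨fun k => ?_, fun k => ?_⟩ <;> obtain rfl | hk := eq_or_ne k a
  · simpa using hl
  · rw [Pi.single_eq_of_ne hk]
    exact measurable_const
  · simpa using hl0
  · simp [hk]

variable [Fintype ι] [AddCommGroup E] [Module ℝ E]

/-- The random vector `∑ k, c k • vec k`. -/
def combine (G : ConicFamily m ι E) (c : ι → Ω → ℝ) (ω : Ω) : E :=
  ∑ k, c k ω • G.vec k ω

/-- The convex cone of the random vectors that are a.s. equal to an admissible combination of the
`vec k` with `k ∈ S`. -/
def cone (G : ConicFamily m ι E) (P : Measure Ω) (S : Set ι) : Set (Ω → E) :=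
  {x | ∃ c, G.IsAdmissible c ∧ (∀ k ∉ S, c k = 0) ∧ x =ᵐ[P] G.combine c}

/-- Null combinations are reversible: an admissible combination can only vanish a.s. if none of
the one-sided vectors is used in it. -/
def IsNullReversible (G : ConicFamily m ι E) (P : Measure Ω) : Prop :=
  ∀ c, G.IsAdmissible c → G.combine c =ᵐ[P] 0 → ∀ᵐ ω ∂P, ∀ k, ω ∈ G.oneSided k → c k ω = 0

variable {S : Set ι} {x y : Ω → E}

theorem combine_add (G : ConicFamily m ι E) (c c' : ι → Ω → ℝ) :
    G.combine (c + c') = G.combine c + G.combine c' := by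
  ext ω
  simp [combine, add_smul, Finset.sum_add_distrib]

theorem combine_mul (G : ConicFamily m ι E) (r : Ω → ℝ) (c : ι → Ω → ℝ) :
    G.combine (fun k => r * c k) = r • G.combine c := by
  ext ω
  simp [combine, mul_smul, Finset.smul_sum]

theorem combine_single [DecidableEq ι] (G : ConicFamily m ι E) (a : ι) (l : Ω → ℝ) :
    G.combine (Pi.single a l) = l • G.vec a := by
  ext ω
  rw [combine, Finset.sum_eq_single_of_mem a (Finset.mem_univ a) fun k _ hk => by simp [hk]]
  simp

theorem cone_mono (G : ConicFamily m ι E) (P : Measure Ω) : Monotone (G.cone P) :=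
  fun _ _ hST _ ⟨c, hc, hcS, hx⟩ => ⟨c, hc, fun k hk => hcS k (notMem_subset hST hk), hx⟩

theorem mem_cone_congr (h : x =ᵐ[P] y) (hx : x ∈ G.cone P S) : y ∈ G.cone P S :=
  let ⟨c, hc, hcS, hxc⟩ := hx
  ⟨c, hc, hcS, h.symm.trans hxc⟩

theorem add_mem_cone (hx : x ∈ G.cone P S) (hy : y ∈ G.cone P S) : x + y ∈ G.cone P S := by
  obtain ⟨c, hc, hcS, hx⟩ := hx
  obtain ⟨c', hc', hcS', hy⟩ := hy
  refine ⟨c + c', hc.add hc', fun k hk => ?_, ?_⟩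
  · simp [hcS k hk, hcS' k hk]
  · rw [combine_add]
    exact hx.add hy

theorem smul_mem_cone {r : Ω → ℝ} (hr : ∀ k ∈ S, Measurable[G.info k] r) (hr0 : 0 ≤ r)
    (hx : x ∈ G.cone P S) : r • x ∈ G.cone P S := by
  obtain ⟨c, hc, hcS, hx⟩ := hx
  refine ⟨fun k => r * c k, ⟨fun k => ?_, fun k ω hω => mul_nonneg (hr0 ω) (hc.2 k ω hω)⟩,
    fun k hk => by simp [hcS k hk], ?_⟩
  · by_cases hk : k ∈ S
    · exact (hr k hk).mul (hc.1 k)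
    · simp only [hcS k hk, mul_zero]
      exact measurable_const
  · rw [combine_mul]
    filter_upwards [hx] with ω hω
    simp [hω]

theorem smul_mem_cone_of_neg_mem {r : Ω → ℝ} (hr : ∀ k ∈ S, Measurable[G.info k] r)
    (hx : x ∈ G.cone P S) (hx' : -x ∈ G.cone P S) : r • x ∈ G.cone P S := by
  have hsplit : r • x = r⁺ • x + r⁻ • -x := by
    rw [smul_neg, ← sub_eq_add_neg, ← sub_smul, posPart_sub_negPart]
  rw [hsplit]
  have hpos (k : ι) (hk : k ∈ S) : Measurable[G.info k] r⁺ := (hr k hk).max measurable_const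
  have hneg (k : ι) (hk : k ∈ S) : Measurable[G.info k] r⁻ := (hr k hk).neg.max measurable_const
  exact add_mem_cone (smul_mem_cone hpos (posPart_nonneg r) hx)
    (smul_mem_cone hneg (negPart_nonneg r) hx')

theorem smul_vec_mem_cone {a : ι} (ha : a ∈ S) {l : Ω → ℝ} (hl : Measurable[G.info a] l)
    (hl0 : ∀ ω ∈ G.oneSided a, 0 ≤ l ω) : l • G.vec a ∈ G.cone P S := by
  classical
  refine ⟨Pi.single a l, isAdmissible_single hl hl0, fun k hk => ?_, ?_⟩
  · exact Pi.single_eq_of_ne (ne_of_mem_of_not_mem ha hk).symm _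
  · rw [combine_single]

theorem exists_sub_smul_vec_mem_cone {a : ι} (ha : a ∉ S) (hx : x ∈ G.cone P (insert a S)) :
    ∃ l : Ω → ℝ, Measurable[G.info a] l ∧ (∀ ω ∈ G.oneSided a, 0 ≤ l ω) ∧
      x - l • G.vec a ∈ G.cone P S := by
  classical
  obtain ⟨c, hc, hcS, hx⟩ := hx
  refine ⟨c a, hc.1 a, hc.2 a, Function.update c a 0, ⟨fun k => ?_, fun k => ?_⟩, fun k hk => ?_,
    ?_⟩
  · obtain rfl | hk := eq_or_ne k a
    · rw [Function.update_self]
      exact measurable_const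
    · simpa [hk] using hc.1 k
  · obtain rfl | hk := eq_or_ne k a
    · simp
    · simpa [hk] using hc.2 k
  · obtain rfl | hka := eq_or_ne k a
    · simp
    · simpa [hka] using hcS k (by simp [hka, hk])
  · have hdecomp : c = Function.update c a 0 + Pi.single a (c a) := by
      ext k
      obtain rfl | hk := eq_or_ne k a <;> simp [*]
    rw [hdecomp, combine_add, combine_single] at hx
    filter_upwards [hx] with ω hω
    simp [hω]

theorem eval_mem_cone {κ : Type*} [Countable κ] [MeasurableSpace κ] [MeasurableSingletonClass κ]
    {X : κ → Ω → E} (hX : ∀ n, X n ∈ G.cone P S) {N : Ω → κ}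
    (hN : ∀ k ∈ S, Measurable[G.info k] N) : (fun ω => X (N ω) ω) ∈ G.cone P S := by
  choose c hc hcS hXc using hX
  refine ⟨fun k ω => c (N ω) k ω, ⟨fun k => ?_, fun k ω hω => (hc (N ω)).2 k ω hω⟩,
    fun k hk => ?_, ?_⟩
  · by_cases hk : k ∈ S
    · exact measurable_eval_countable (fun n => (hc n).1 k) (hN k hk)
    · simp [hcS _ k hk]
  · ext ω
    simp [hcS _ k hk]
  · filter_upwards [ae_all_iff.2 hXc] with ω hω
    exact hω (N ω)

theorem IsNullReversible.neg_mem_cone (hG : G.IsNullReversible P) (hx : x ∈ G.cone P S)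
    (hx' : -x ∈ G.cone P univ) : -x ∈ G.cone P S := by
  obtain ⟨c, hc, hcS, hx⟩ := hx
  obtain ⟨c', hc', -, hx'⟩ := hx'
  have hnull : G.combine (c + c') =ᵐ[P] 0 := by
    rw [combine_add]
    filter_upwards [hx, hx'] with ω hω hω'
    simp [← hω, ← hω']
  have hc_zero : ∀ᵐ ω ∂P, ∀ k, ω ∈ G.oneSided k → c k ω = 0 := by
    filter_upwards [hG _ (hc.add hc') hnull] with ω hω k hk
    exact ((add_eq_zero_iff_of_nonneg (hc.2 k ω hk) (hc'.2 k ω hk)).1 (hω k hk)).1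
  refine ⟨fun k => (G.oneSided k)ᶜ.indicator (-c k), ⟨fun k => ?_, fun k ω hω => ?_⟩,
    fun k hk => ?_, ?_⟩
  · exact (hc.1 k).neg.indicator (G.measurableSet_oneSided k).compl
  · simp [hω]
  · simp [hcS k hk]
  · filter_upwards [hx, hc_zero] with ω hω hzero
    simp only [Pi.neg_apply, hω, combine, ← Finset.sum_neg_distrib, ← neg_smul]
    refine Finset.sum_congr rfl fun k _ => ?_
    by_cases hk : ω ∈ G.oneSided k
    · simp [hk, hzero k hk]
    · simp [hk]

end ConicFamily

/-- Closedness of a set of random vectors under limits of a.e. convergent sequences. -/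
def IsAESeqClosed {Ω E : Type*} {_ : MeasurableSpace Ω} [TopologicalSpace E] (P : Measure Ω)
    (C : Set (Ω → E)) : Prop :=
  ∀ (X : ℕ → Ω → E) (x : Ω → E), (∀ n, X n ∈ C) →
    (∀ᵐ ω ∂P, Tendsto (fun n => X n ω) atTop (𝓝 (x ω))) → x ∈ C

namespace ConicFamily

variable {Ω ι E : Type*} {m : MeasurableSpace Ω} {P : Measure Ω} [Fintype ι] [AddCommGroup E]
  [Module ℝ E] [TopologicalSpace E] {G : ConicFamily m ι E} {S : Set ι}

theorem isAESeqClosed_cone_empty [T2Space E] : IsAESeqClosed P (G.cone P ∅) := by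
  have hcone {x : Ω → E} : x ∈ G.cone P ∅ ↔ x =ᵐ[P] 0 := by
    have hcombine : G.combine 0 = 0 := by ext; simp [combine]
    refine ⟨fun ⟨c, _, hc, hx⟩ => ?_, fun hx => ⟨0, ⟨fun k => ?_, by simp⟩, by simp, ?_⟩⟩
    · rwa [show c = 0 from funext fun k => hc k (notMem_empty k), hcombine] at hx
    · exact measurable_const
    · rwa [hcombine]
  intro X x hX hlim
  rw [hcone]
  filter_upwards [hlim, ae_all_iff.2 fun n => hcone.1 (hX n)] with ω hω hXω
  exact tendsto_nhds_unique hω (tendsto_const_nhds.congr fun n => (hXω n).symm)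

section Insert

variable [IsTopologicalAddGroup E] [ContinuousSMul ℝ E] {a : ι} {l : ℕ → Ω → ℝ} {α : Ω → EReal}
  {X : ℕ → Ω → E} {x : Ω → E}

section Limit

variable (hG : G.IsNullReversible P) (hS : IsAESeqClosed P (G.cone P S))
  (hmin : ∀ k ∈ S, G.info a ≤ G.info k) (hl : ∀ n, Measurable[G.info a] (l n))
  (hα : Measurable[G.info a] α) (hα0 : ∀ ω ∈ G.oneSided a, 0 ≤ α ω)
  (hlα : ∀ ω, Tendsto (fun n => (l n ω : EReal)) atTop (𝓝 (α ω)))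
  (hX : ∀ n, X n - l n • G.vec a ∈ G.cone P S)
  (hXx : ∀ᵐ ω ∂P, Tendsto (fun n => X n ω) atTop (𝓝 (x ω)))
include hG hS hmin hl hα hα0 hlα hX hXx

theorem smul_vec_mem_cone_of_tendsto {r : Ω → ℝ} (hr : Measurable[G.info a] r) :
    (r * (signAtInfinity ∘ α)) • G.vec a ∈ G.cone P S := by
  set b : Ω → ℝ := signAtInfinity ∘ α with hb
  have hbmeas : Measurable[G.info a] b := measurable_signAtInfinity.comp hα
  -- Where `l n` tends to `±∞`, dividing `X n - l n • G.vec a` by `|l n|` leaves `∓ G.vec a`.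
  have hneg : -(b • G.vec a) ∈ G.cone P S := by
    refine hS (fun n => (b ^ 2 * |l n|⁻¹) • (X n - l n • G.vec a)) _
      (fun n => smul_mem_cone (fun k hk => ?_) ?_ (hX n)) ?_
    · exact ((hbmeas.pow_const 2).mul (measurable_norm.comp (hl n)).inv).mono (hmin k hk) le_rfl
    · exact fun ω => mul_nonneg (sq_nonneg (b ω)) (inv_nonneg.2 (abs_nonneg (l n ω)))
    · filter_upwards [hXx] with ω hω
      have hlim := ((tendsto_signAtInfinity_sq_mul_abs_inv (hlα ω)).smul hω).sub
        ((tendsto_signAtInfinity_sq_mul_abs_inv_mul (hlα ω)).smul_const (G.vec a ω))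
      simpa [hb, smul_sub, smul_smul, mul_assoc] using hlim
  have hpos : b • G.vec a ∈ G.cone P S := by
    have huniv : b • G.vec a ∈ G.cone P univ :=
      smul_vec_mem_cone (mem_univ a) hbmeas fun ω hω => signAtInfinity_nonneg (hα0 ω hω)
    simpa using hG.neg_mem_cone hneg (by simpa using huniv)
  rw [mul_smul]
  exact smul_mem_cone_of_neg_mem (fun k hk => hr.mono (hmin k hk) le_rfl) hpos hneg

theorem mem_cone_insert_of_tendsto : x ∈ G.cone P (insert a S) := by
  set b : Ω → ℝ := signAtInfinity ∘ α with hb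
  set β : Ω → ℝ := fun ω => (α ω).toReal
  have hbsq (k : ι) (hk : k ∈ S) : Measurable[G.info k] (b ^ 2) :=
    ((measurable_signAtInfinity.comp hα).pow_const 2).mono (hmin k hk) le_rfl
  have hbsq_le : 0 ≤ 1 - b ^ 2 := fun ω => by
    simp only [hb, signAtInfinity, Pi.zero_apply, Pi.sub_apply, Pi.pow_apply, Function.comp_apply]
    split_ifs <;> norm_num
  have hbounded : (1 - b ^ 2) • x - β • G.vec a ∈ G.cone P S := by
    refine hS (fun n => (1 - b ^ 2) • (X n - l n • G.vec a)) _
      (fun n => smul_mem_cone (fun k hk => (hbsq k hk).const_sub 1) hbsq_le (hX n)) ?_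
    filter_upwards [hXx] with ω hω
    have hlim := (hω.const_smul (1 - b ω ^ 2)).sub
      ((tendsto_one_sub_signAtInfinity_sq_mul (hlα ω)).smul_const (G.vec a ω))
    simpa [hb, smul_sub, smul_smul] using hlim
  have hunbounded : b ^ 2 • x ∈ G.cone P S := by
    refine hS (fun n => b ^ 2 • X n) _ (fun n => ?_)
      (hXx.mono fun ω hω => hω.const_smul (b ω ^ 2))
    have hvec := smul_vec_mem_cone_of_tendsto hG hS hmin hl hα hα0 hlα hX hXx
      ((hl n).mul (measurable_signAtInfinity.comp hα))
    convert add_mem_cone (smul_mem_cone hbsq (fun ω => sq_nonneg (b ω)) (hX n)) hvec using 1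
    rw [smul_sub, smul_smul]
    change _ = _ - _ + (l n * b * b) • G.vec a
    rw [show l n * b * b = b ^ 2 * l n by ring, sub_add_cancel]
  have hβvec : β • G.vec a ∈ G.cone P (insert a S) :=
    smul_vec_mem_cone (mem_insert a S) hα.ereal_toReal fun ω hω => EReal.toReal_nonneg (hα0 ω hω)
  have hmono := G.cone_mono P (subset_insert a S)
  convert add_mem_cone (add_mem_cone (hmono hunbounded) (hmono hbounded)) hβvec using 1
  rw [sub_smul, one_smul]
  abel

end Limit

theorem IsNullReversible.isAESeqClosed_cone_insert (hG : G.IsNullReversible P) (ha : a ∉ S)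
    (hmin : ∀ k ∈ S, G.info a ≤ G.info k) (hS : IsAESeqClosed P (G.cone P S)) :
    IsAESeqClosed P (G.cone P (insert a S)) := by
  intro X x hX hXx
  choose l hl hl0 hXl using fun n => exists_sub_smul_vec_mem_cone ha (hX n)
  obtain ⟨N, hN, hkN, hlim⟩ := exists_measurable_subseq_tendsto_limsup
    fun n => measurable_coe_real_ereal.comp (hl n)
  refine mem_cone_insert_of_tendsto (X := fun n ω => X (N n ω) ω) hG hS hmin
    (fun n => measurable_eval_countable hl (hN n))
    (Measurable.limsup fun n => measurable_coe_real_ereal.comp (hl n)) (fun ω hω => ?_) hlim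
    (fun n => eval_mem_cone hXl fun k hk => (hN n).mono (hmin k hk) le_rfl) ?_
  · exact le_limsup_of_le (by isBoundedDefault) fun b hb =>
      let ⟨n, hn⟩ := hb.exists
      (EReal.coe_nonneg.2 (hl0 n ω hω)).trans hn
  · filter_upwards [hXx] with ω hω
    exact hω.comp (tendsto_atTop_mono (fun n => hkN n ω) tendsto_id)

end Insert

theorem IsNullReversible.isAESeqClosed_cone [IsTopologicalAddGroup E] [ContinuousSMul ℝ E]
    [T2Space E] (hG : G.IsNullReversible P) (S : Set ι) : IsAESeqClosed P (G.cone P S) := by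
  classical
  induction h : S.ncard generalizing S with
  | zero =>
    rw [(Set.ncard_eq_zero S.toFinite).1 h]
    exact isAESeqClosed_cone_empty
  | succ n ih =>
    have hne : S.Nonempty := (Set.ncard_pos S.toFinite).1 (by lia)
    obtain ⟨a, haS, hmin⟩ := S.toFinite.exists_minimalFor G.info S hne
    rw [← insert_sdiff_self_of_mem haS]
    refine hG.isAESeqClosed_cone_insert (fun ha => ha.2 rfl) (fun k hk => ?_)
      (ih _ (by rw [Set.ncard_sdiff_singleton_of_mem haS]; lia))
    exact (G.info_total a k).elim id fun hka => hmin hk.1 hka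

end ConicFamily

/-! ### The Kreps–Yan theorem in `L²` -/

theorem exists_mem_forall_ae_le_of_iUnion_mem {Ω : Type*} {m : MeasurableSpace Ω} (μ : Measure Ω)
    [IsFiniteMeasure μ] {𝒜 : Set (Set Ω)} (hne : 𝒜.Nonempty) (hmeas : ∀ A ∈ 𝒜, MeasurableSet A)
    (hUnion : ∀ A : ℕ → Set Ω, (∀ n, A n ∈ 𝒜) → ⋃ n, A n ∈ 𝒜) :
    ∃ A ∈ 𝒜, ∀ B ∈ 𝒜, B ≤ᵐ[μ] A := by
  obtain ⟨u, -, hu, hu𝒜⟩ := exists_seq_tendsto_sSup (hne.image μ) (OrderTop.bddAbove _)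
  choose A hA𝒜 hAu using hu𝒜
  refine ⟨⋃ n, A n, hUnion A hA𝒜, fun B hB => ?_⟩
  have hAB : (⋃ n, A n) ∪ B ∈ 𝒜 := by
    let A' : ℕ → Set Ω := fun n => n.casesOn B A
    rw [union_comm, show B ∪ ⋃ n, A n = ⋃ n, A' n from union_iUnion_nat_succ A']
    exact hUnion A' fun | 0 => hB | n + 1 => hA𝒜 n
  have hle : μ ((⋃ n, A n) ∪ B) ≤ μ (⋃ n, A n) :=
    (le_sSup (mem_image_of_mem μ hAB)).trans
      (le_of_tendsto' hu fun n => hAu n ▸ measure_mono (subset_iUnion A n))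
  exact subset_union_right.eventuallyLE.trans (ae_eq_of_subset_of_measure_ge subset_union_left hle
    (hmeas _ (hUnion A hA𝒜)).nullMeasurableSet (measure_ne_top μ _)).symm.le

section KrepsYan

theorem indicatorConstLp_nonneg {Ω E : Type*} {m : MeasurableSpace Ω} {μ : Measure Ω} {p : ℝ≥0∞}
    [NormedAddCommGroup E] [PartialOrder E] {s : Set Ω} (hs : MeasurableSet s) (hμs : μ s ≠ ∞)
    {c : E} (hc : 0 ≤ c) : 0 ≤ indicatorConstLp p hs hμs c := by
  rw [← Lp.coeFn_nonneg]
  filter_upwards [indicatorConstLp_coeFn (p := p) (hs := hs) (hμs := hμs) (c := c)] with ω hω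
  rw [hω]
  exact indicator_nonneg (fun _ _ => hc) ω

variable {Ω : Type*} {m : MeasurableSpace Ω} {μ : Measure Ω} [IsFiniteMeasure μ]
  {C : ProperCone ℝ (Lp ℝ 2 μ)}

theorem nonneg_of_mem_innerDual (hC : ∀ x, 0 ≤ x → x ∈ C) {z : Lp ℝ 2 μ}
    (hz : z ∈ ProperCone.innerDual (C : Set (Lp ℝ 2 μ))) : 0 ≤ z := by
  rw [← Lp.coeFn_nonneg]
  refine ae_nonneg_of_forall_setIntegral_nonneg ((Lp.memLp z).integrable one_le_two)
    fun s hs hμs => ?_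
  rw [← L2.inner_indicatorConstLp_one hs hμs.ne z]
  exact hz (hC _ (indicatorConstLp_nonneg hs hμs.ne zero_le_one))

theorem exists_mem_innerDual_pos_on_iUnion (hC : ∀ x, 0 ≤ x → x ∈ C) {s : ℕ → Set Ω}
    {z : ℕ → Lp ℝ 2 μ} (hz : ∀ n, z n ∈ ProperCone.innerDual (C : Set (Lp ℝ 2 μ)))
    (hpos : ∀ n, ∀ᵐ ω ∂μ, ω ∈ s n → 0 < z n ω) :
    ∃ y ∈ ProperCone.innerDual (C : Set (Lp ℝ 2 μ)), ∀ᵐ ω ∂μ, ω ∈ ⋃ n, s n → 0 < y ω := by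
  set w : ℕ → ℝ := fun n => (1 / 2) ^ n * (1 + ‖z n‖)⁻¹
  have hw (n : ℕ) : 0 < w n := by positivity
  have hwz (n : ℕ) : w n • z n ∈ ProperCone.innerDual (C : Set (Lp ℝ 2 μ)) :=
    (ProperCone.innerDual _).smul_mem (hz n) (hw n).le
  have hsum : Summable fun n => w n • z n := by
    refine Summable.of_norm_bounded summable_geometric_two fun n => ?_
    rw [norm_smul, Real.norm_of_nonneg (hw n).le, mul_assoc]
    exact mul_le_of_le_one_right (by positivity) (inv_mul_le_one_of_le₀ (by simp) (by positivity))
  refine ⟨∑' n, w n • z n, tsum_mem (ProperCone.innerDual _).isClosed hwz, ?_⟩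
  have hle (n : ℕ) : w n • z n ≤ ∑' n, w n • z n :=
    hsum.le_tsum n fun k _ => nonneg_of_mem_innerDual hC (hwz k)
  filter_upwards [ae_all_iff.2 hpos, ae_all_iff.2 fun n => (Lp.coeFn_le _ _).2 (hle n),
    ae_all_iff.2 fun n => Lp.coeFn_smul (w n) (z n)] with ω hpos hle hsmul hω
  obtain ⟨n, hn⟩ := mem_iUnion.1 hω
  calc 0 < w n * z n ω := mul_pos (hw n) (hpos n hn)
    _ = (w n • z n) ω := (hsmul n).symm
    _ ≤ _ := hle n

theorem exists_mem_innerDual_setIntegral_pos (hC : ∀ x ∈ C, x ≤ 0 → x = 0) {s : Set Ω}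
    (hs : MeasurableSet s) (hμs : μ s ≠ 0) :
    ∃ z ∈ ProperCone.innerDual (C : Set (Lp ℝ 2 μ)), 0 < ∫ ω in s, z ω ∂μ := by
  set f : Lp ℝ 2 μ := indicatorConstLp 2 hs (measure_ne_top μ s) 1
  have hf : 0 ≤ f := indicatorConstLp_nonneg hs (measure_ne_top μ s) zero_le_one
  have hfC : -f ∉ C := fun hmem => by
    have hnorm : ‖f‖ = μ.real s ^ (1 / (2 : ℝ)) := by
      simpa using norm_indicatorConstLp (c := (1 : ℝ)) two_ne_zero ENNReal.ofNat_ne_top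
    have hzero := neg_eq_zero.1 (hC _ hmem (neg_nonpos.2 hf))
    rw [hzero, norm_zero, eq_comm, Real.rpow_eq_zero measureReal_nonneg (by norm_num)] at hnorm
    exact hμs ((measureReal_eq_zero_iff).1 hnorm)
  obtain ⟨z, hz, hneg⟩ := C.hyperplane_separation' hfC
  refine ⟨z, hz, ?_⟩
  rwa [inner_neg_left, neg_lt_zero, L2.inner_indicatorConstLp_one] at hneg

theorem exists_mem_innerDual_ae_pos (hpos : ∀ x, 0 ≤ x → x ∈ C) (hneg : ∀ x ∈ C, x ≤ 0 → x = 0) :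
    ∃ z ∈ ProperCone.innerDual (C : Set (Lp ℝ 2 μ)), ∀ᵐ ω ∂μ, 0 < z ω := by
  set 𝒜 : Set (Set Ω) := {s | MeasurableSet s ∧
    ∃ z ∈ ProperCone.innerDual (C : Set (Lp ℝ 2 μ)), ∀ᵐ ω ∂μ, ω ∈ s → 0 < z ω}
  have hUnion (A : ℕ → Set Ω) (hA : ∀ n, A n ∈ 𝒜) : ⋃ n, A n ∈ 𝒜 := by
    choose hmeas z hz hzA using hA
    exact ⟨.iUnion hmeas, exists_mem_innerDual_pos_on_iUnion hpos hz hzA⟩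
  obtain ⟨A, ⟨hA, z, hz, hzA⟩, hmax⟩ := exists_mem_forall_ae_le_of_iUnion_mem μ
    (𝒜 := 𝒜) ⟨∅, .empty, 0, zero_mem _, by simp⟩ (fun _ h => h.1) hUnion
  refine ⟨z, hz, ?_⟩
  suffices hAc : μ Aᶜ = 0 by
    filter_upwards [hzA, measure_eq_zero_iff_ae_notMem.1 hAc] with ω hω hωA
    exact hω (not_not.1 hωA)
  by_contra hAc
  obtain ⟨y, hy, hint⟩ := exists_mem_innerDual_setIntegral_pos hneg hA.compl hAc
  have hyA : {ω | 0 < y ω} ≤ᵐ[μ] A := hmax _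
    ⟨measurableSet_lt measurable_const (Lp.stronglyMeasurable y).measurable, y, hy,
      ae_of_all _ fun _ => id⟩
  refine hint.not_ge (setIntegral_nonpos_ae hA.compl ?_)
  filter_upwards [hyA] with ω hω hωA
  exact not_lt.1 fun h => hωA (hω h)

end KrepsYan

/-! ### Conditional expectations of pairings -/

section CondExp

variable {Ω : Type*} {H m : MeasurableSpace Ω} {μ : Measure Ω}

section Real

variable {f : Ω → ℝ}

theorem ae_eq_zero_of_condExp_eq_zero (hH : H ≤ m) [SigmaFinite (μ.trim hH)]
    (hf : Integrable f μ) (hf0 : 0 ≤ᵐ[μ] f) : ∀ᵐ ω ∂μ, (μ[f|H]) ω = 0 → f ω = 0 := by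
  set s : Set Ω := {ω | (μ[f|H]) ω = 0}
  have hs : MeasurableSet[H] s :=
    stronglyMeasurable_condExp.measurable (measurableSet_singleton (0 : ℝ))
  have hint : ∫ ω in s, f ω ∂μ = 0 := by
    rw [← setIntegral_condExp hH hf hs]
    exact setIntegral_eq_zero_of_forall_eq_zero fun _ hω => hω
  rw [setIntegral_eq_zero_iff_of_nonneg_ae (ae_restrict_of_ae hf0) hf.integrableOn] at hint
  exact (ae_restrict_iff' (hH s hs)).1 hint

theorem condExp_nonneg_of_forall_setIntegral_nonneg (hH : H ≤ m) [SigmaFinite (μ.trim hH)]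
    (hf : Integrable f μ) (hf0 : ∀ s, MeasurableSet[H] s → 0 ≤ ∫ ω in s, f ω ∂μ) :
    0 ≤ᵐ[μ] μ[f|H] := by
  refine ae_le_of_ae_le_trim (hm := hH) (ae_nonneg_of_forall_setIntegral_nonneg
    (integrable_condExp.trim hH stronglyMeasurable_condExp) fun s hs _ => ?_)
  rw [← setIntegral_trim hH stronglyMeasurable_condExp hs, setIntegral_condExp hH hf hs]
  exact hf0 s hs

end Real

variable {E F : Type*} [NormedAddCommGroup E] [NormedSpace ℝ E] [NormedAddCommGroup F]
  [NormedSpace ℝ F] (B : F →L[ℝ] E →L[ℝ] ℝ) {X : Ω → F} {ζ : Ω → E}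

/- `B (X ·) (ζ ·)` need not be integrable; the positive `H`-measurable factor `(1 + ‖X‖)⁻¹` makes it
so without affecting its sign. -/

theorem integrable_inv_one_add_norm_mul_bilin (hX : AEStronglyMeasurable X μ)
    (hζ : Integrable ζ μ) : Integrable (fun ω => (1 + ‖X ω‖)⁻¹ * B (X ω) (ζ ω)) μ := by
  have hbound (ω : Ω) : ‖(1 + ‖X ω‖)⁻¹ • X ω‖ ≤ 1 := by
    rw [norm_smul, Real.norm_of_nonneg (by positivity)]
    exact inv_mul_le_one_of_le₀ (by simp) (by positivity)
  have hX' : AEStronglyMeasurable (fun ω => (1 + ‖X ω‖)⁻¹ • X ω) μ :=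
    (hX.norm.const_add 1).inv₀.smul hX
  simpa using B.integrable_of_bilin_of_bdd_left 1 hX' (ae_of_all _ hbound) hζ

theorem condExp_inv_one_add_norm_mul_bilin [CompleteSpace E] (hH : H ≤ m)
    (hX : StronglyMeasurable[H] X) (hζ : Integrable ζ μ) :
    μ[fun ω => (1 + ‖X ω‖)⁻¹ * B (X ω) (ζ ω)|H] =ᵐ[μ]
      fun ω => (1 + ‖X ω‖)⁻¹ * B (X ω) (μ[ζ|H] ω) := by
  have hX' : StronglyMeasurable[H] fun ω => (1 + ‖X ω‖)⁻¹ • X ω :=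
    ((hX.norm.const_add 1).inv₀).smul hX
  simpa using condExp_bilin_of_stronglyMeasurable_left B hX'
    (by simpa using integrable_inv_one_add_norm_mul_bilin B (hX.mono hH).aestronglyMeasurable hζ) hζ

theorem ae_bilin_condExp_nonneg_of_forall_setIntegral [CompleteSpace E] (hH : H ≤ m)
    [SigmaFinite (μ.trim hH)] (hX : StronglyMeasurable[H] X) (hζ : Integrable ζ μ)
    (h : ∀ s, MeasurableSet[H] s → 0 ≤ ∫ ω in s, (1 + ‖X ω‖)⁻¹ * B (X ω) (ζ ω) ∂μ) :
    ∀ᵐ ω ∂μ, 0 ≤ B (X ω) (μ[ζ|H] ω) := by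
  filter_upwards [condExp_inv_one_add_norm_mul_bilin B hH hX hζ,
    condExp_nonneg_of_forall_setIntegral_nonneg hH
      (integrable_inv_one_add_norm_mul_bilin B (hX.mono hH).aestronglyMeasurable hζ) h]
    with ω hω hnonneg
  rw [Pi.zero_apply, hω] at hnonneg
  exact nonneg_of_mul_nonneg_right hnonneg (by positivity)

theorem ae_bilin_condExp_nonneg [CompleteSpace E] (hH : H ≤ m) [SigmaFinite (μ.trim hH)]
    (hX : StronglyMeasurable[H] X) (hζ : Integrable ζ μ) (h : ∀ᵐ ω ∂μ, 0 ≤ B (X ω) (ζ ω)) :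
    ∀ᵐ ω ∂μ, 0 ≤ B (X ω) (μ[ζ|H] ω) :=
  ae_bilin_condExp_nonneg_of_forall_setIntegral B hH hX hζ fun _ _ =>
    integral_nonneg_of_ae (ae_restrict_of_ae (h.mono fun _ hω => mul_nonneg (by positivity) hω))

theorem ae_bilin_eq_zero_of_bilin_condExp_eq_zero [CompleteSpace E] (hH : H ≤ m)
    [SigmaFinite (μ.trim hH)] (hX : StronglyMeasurable[H] X) (hζ : Integrable ζ μ)
    (h : ∀ᵐ ω ∂μ, 0 ≤ B (X ω) (ζ ω)) : ∀ᵐ ω ∂μ, B (X ω) (μ[ζ|H] ω) = 0 → B (X ω) (ζ ω) = 0 := by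
  filter_upwards [condExp_inv_one_add_norm_mul_bilin B hH hX hζ, ae_eq_zero_of_condExp_eq_zero hH
    (integrable_inv_one_add_norm_mul_bilin B (hX.mono hH).aestronglyMeasurable hζ)
    (h.mono fun _ hω => mul_nonneg (by positivity) hω)] with ω hω hzero hB
  exact (mul_eq_zero_iff_left (by positivity)).1 (hzero (by rw [hω, hB, mul_zero]))

theorem ae_pos_condExp_of_ae_pos [CompleteSpace E] (hH : H ≤ m) [SigmaFinite (μ.trim hH)]
    (hζ : Integrable ζ μ) (φ : E →L[ℝ] ℝ) (h : ∀ᵐ ω ∂μ, 0 < φ (ζ ω)) :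
    ∀ᵐ ω ∂μ, 0 < φ (μ[ζ|H] ω) := by
  have hφ : StronglyMeasurable[H] fun _ : Ω => φ := stronglyMeasurable_const
  have hnonneg : ∀ᵐ ω ∂μ, 0 ≤ φ (ζ ω) := h.mono fun _ => le_of_lt
  filter_upwards [h, ae_bilin_condExp_nonneg (.id ℝ _) hH hφ hζ hnonneg,
    ae_bilin_eq_zero_of_bilin_condExp_eq_zero (.id ℝ _) hH hφ hζ hnonneg] with ω hω hle hzero
  exact hle.lt_of_ne' fun heq => hω.ne' (hzero heq)

end CondExp

/-! ### Separating densities for arbitrage-free families -/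

theorem ae_prod_count_iff {Ω κ : Type*} {m : MeasurableSpace Ω} {μ : Measure Ω}
    [Countable κ] [MeasurableSpace κ] {p : Ω × κ → Prop} :
    (∀ᵐ z ∂μ.prod Measure.count, p z) ↔ ∀ᵐ ω ∂μ, ∀ i, p (ω, i) := by
  refine ⟨fun h => (Measure.ae_ae_of_ae_prod h).mono fun ω => Measure.ae_count_iff.1, fun h => ?_⟩
  refine measure_mono_null (t := {ω | ¬∀ i, p (ω, i)} ×ˢ univ) (fun z hz => ?_) ?_
  · exact ⟨fun hp => hz (hp z.2), mem_univ _⟩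
  · rw [Measure.prod_prod, ae_iff.1 h, zero_mul]

namespace ConicFamily

variable {Ω ι κ : Type*} {m : MeasurableSpace Ω} {P : Measure Ω} [Fintype ι]

/-- No arbitrage: an admissible combination can only be nonpositive a.s. if it vanishes and uses
none of the one-sided vectors. (The vectors are thought of as prices paid, so that a gain is a
nonpositive combination.) -/
def IsArbitrageFree (G : ConicFamily m ι (κ → ℝ)) (P : Measure Ω) : Prop :=
  ∀ c, G.IsAdmissible c → G.combine c ≤ᵐ[P] 0 →
    ∀ᵐ ω ∂P, G.combine c ω = 0 ∧ ∀ k, ω ∈ G.oneSided k → c k ω = 0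

/-- The family `G` with the standard basis vectors adjoined, to be held in arbitrary nonnegative
amounts. -/
def adjoinOrthant [DecidableEq κ] (G : ConicFamily m ι (κ → ℝ)) :
    ConicFamily m (ι ⊕ κ) (κ → ℝ) where
  info := Sum.elim G.info fun _ => m
  info_le := Sum.rec G.info_le fun _ => le_rfl
  info_total
    | .inl k, .inl l => G.info_total k l
    | .inl k, .inr _ => .inl (G.info_le k)
    | .inr _, .inl l => .inr (G.info_le l)
    | .inr _, .inr _ => .inl le_rfl
  vec := Sum.elim G.vec fun i _ => Pi.single i 1
  oneSided := Sum.elim G.oneSided fun _ => univ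
  measurableSet_oneSided := Sum.rec G.measurableSet_oneSided fun _ => .univ

variable {G : ConicFamily m ι (κ → ℝ)}

theorem IsArbitrageFree.isNullReversible (hG : G.IsArbitrageFree P) : G.IsNullReversible P :=
  fun c hc hzero => (hG c hc hzero.le).mono fun _ hω => hω.2

section Orthant

variable [Fintype κ] [DecidableEq κ]

theorem combine_adjoinOrthant (G : ConicFamily m ι (κ → ℝ)) (c : ι ⊕ κ → Ω → ℝ) (ω : Ω) :
    G.adjoinOrthant.combine c ω = G.combine (fun k => c (.inl k)) ω + fun i => c (.inr i) ω := by
  ext i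
  simp [combine, adjoinOrthant, Fintype.sum_sum_type, Finset.sum_apply, Pi.single_apply]

theorem IsArbitrageFree.adjoinOrthant (hG : G.IsArbitrageFree P) :
    G.adjoinOrthant.IsArbitrageFree P := by
  intro c hc hle
  have hnonneg (ω : Ω) (i : κ) : 0 ≤ c (.inr i) ω := hc.2 (.inr i) ω (mem_univ ω)
  have hle' : G.combine (fun k => c (.inl k)) ≤ᵐ[P] 0 := by
    filter_upwards [hle] with ω hω i
    have := hω i
    simp only [combine_adjoinOrthant, Pi.add_apply, Pi.zero_apply] at this ⊢
    linarith [hnonneg ω i]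
  filter_upwards [hG _ ⟨fun k => hc.1 (.inl k), fun k => hc.2 (.inl k)⟩ hle', hle] with ω hω hle
  simp only [combine_adjoinOrthant, hω.1, zero_add] at hle ⊢
  have hzero (i : κ) : c (.inr i) ω = 0 := (hle i).antisymm (hnonneg ω i)
  exact ⟨funext hzero, Sum.rec hω.2 fun i _ => hzero i⟩

theorem mem_cone_adjoinOrthant {x : Ω → κ → ℝ} (hx : Measurable x) (hx0 : 0 ≤ᵐ[P] x) :
    x ∈ G.adjoinOrthant.cone P univ := by
  refine ⟨Sum.elim 0 fun i ω => max (x ω i) 0, ⟨?_, ?_⟩, by simp, ?_⟩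
  · exact Sum.rec (fun _ => measurable_const) fun i =>
      ((measurable_pi_apply i).comp hx).max measurable_const
  · exact Sum.rec (fun _ _ _ => le_rfl) fun i ω _ => le_max_right _ _
  · filter_upwards [hx0] with ω hω
    rw [combine_adjoinOrthant]
    ext i
    simpa [combine] using (hω i)

theorem cone_subset_cone_adjoinOrthant : G.cone P univ ⊆ G.adjoinOrthant.cone P univ := by
  rintro x ⟨c, hc, -, hx⟩
  refine ⟨Sum.elim c 0, ⟨?_, ?_⟩, by simp, hx.trans (Eventually.of_forall fun ω => ?_)⟩
  · exact Sum.rec hc.1 fun _ => measurable_const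
  · exact Sum.rec hc.2 fun _ _ _ => le_rfl
  · rw [combine_adjoinOrthant]
    ext i
    simp

end Orthant

section L2

variable [Fintype κ] [MeasurableSpace κ]

/-- The square-integrable elements of `G.cone P univ`. An `ℝ^κ`-valued random vector is encoded as
a real function on `Ω × κ`, which makes `L²` a lattice in which the order is coordinatewise. -/
noncomputable def l2Cone (hG : G.IsNullReversible P) :
    ProperCone ℝ (Lp ℝ 2 (P.prod (Measure.count : Measure κ))) where
  carrier := {f | (fun ω i => f (ω, i)) ∈ G.cone P univ}
  add_mem' {f g} hf hg := by
    refine mem_cone_congr ?_ (add_mem_cone hf hg)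
    filter_upwards [ae_prod_count_iff.1 (Lp.coeFn_add f g)] with ω hω
    exact funext fun i => (hω i).symm
  zero_mem' := by
    refine ⟨0, ⟨fun _ => measurable_const, fun _ _ _ => le_rfl⟩, by simp, ?_⟩
    filter_upwards [ae_prod_count_iff.1 (Lp.coeFn_zero ℝ 2 (P.prod (Measure.count : Measure κ)))]
      with ω hω
    ext i
    simpa [combine] using hω i
  smul_mem' r f hf := by
    refine mem_cone_congr ?_ (smul_mem_cone (r := fun _ => r) (fun _ _ => measurable_const)
      (fun _ => r.2) hf)
    filter_upwards [ae_prod_count_iff.1 (Lp.coeFn_smul (r : ℝ) f)] with ω hω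
    exact funext fun i => (hω i).symm
  isClosed' := by
    refine IsSeqClosed.isClosed fun F f hF hlim => ?_
    obtain ⟨n, -, hn⟩ := (tendstoInMeasure_of_tendsto_Lp hlim).exists_seq_tendsto_ae
    refine hG.isAESeqClosed_cone univ (fun k ω i => F (n k) (ω, i)) _ (fun k => hF (n k)) ?_
    filter_upwards [ae_prod_count_iff.1 hn] with ω hω
    exact tendsto_pi_nhds.2 hω

theorem toLp_mem_l2Cone {hG : G.IsNullReversible P} {f : Ω × κ → ℝ}
    (hf : MemLp f 2 (P.prod Measure.count)) (hfG : (fun ω i => f (ω, i)) ∈ G.cone P univ) :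
    hf.toLp f ∈ l2Cone hG := by
  refine mem_cone_congr ?_ hfG
  filter_upwards [ae_prod_count_iff.1 hf.coeFn_toLp] with ω hω
  exact funext fun i => (hω i).symm

theorem inner_toLp_eq_integral_dotProduct [MeasurableSingletonClass κ] [SFinite P]
    {x : Ω → κ → ℝ}
    (hx : MemLp (fun p : Ω × κ => x p.1 p.2) 2 (P.prod Measure.count))
    (z : Lp ℝ 2 (P.prod (Measure.count : Measure κ))) :
    inner ℝ (hx.toLp _) z = ∫ ω, x ω ⬝ᵥ fun i => z (ω, i) ∂P := by
  have hae : (fun p : Ω × κ => inner ℝ (hx.toLp _ p) (z p)) =ᵐ[P.prod Measure.count]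
      fun p => x p.1 p.2 * z p := by
    filter_upwards [hx.coeFn_toLp] with p hp
    rw [hp, real_inner_eq_re_inner, RCLike.inner_apply]
    simp [mul_comm]
  have hint : Integrable (fun p : Ω × κ => x p.1 p.2 * z p) (P.prod Measure.count) :=
    (L2.integrable_inner (𝕜 := ℝ) (hx.toLp _) z).congr hae
  rw [L2.inner_def, integral_congr_ae hae, integral_prod _ hint]
  simp [integral_count, dotProduct]

theorem IsArbitrageFree.mem_l2Cone_of_nonneg [DecidableEq κ] (hG : G.IsArbitrageFree P)
    {f : Lp ℝ 2 (P.prod (Measure.count : Measure κ))} (hf : 0 ≤ f) :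
    f ∈ l2Cone hG.adjoinOrthant.isNullReversible :=
  mem_cone_adjoinOrthant
    (measurable_pi_iff.2 fun _ => (Lp.stronglyMeasurable f).measurable.comp measurable_prodMk_right)
    ((ae_prod_count_iff.1 ((Lp.coeFn_nonneg f).2 hf)).mono fun _ hω => hω)

theorem IsArbitrageFree.eq_zero_of_mem_l2Cone (hG : G.IsArbitrageFree P)
    {f : Lp ℝ 2 (P.prod (Measure.count : Measure κ))}
    (hf : f ∈ l2Cone hG.isNullReversible) (hf0 : f ≤ 0) : f = 0 := by
  obtain ⟨c, hc, -, hfc⟩ := hf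
  have hle : f ≤ᵐ[P.prod Measure.count] (0 : Lp ℝ 2 _) := (Lp.coeFn_le f 0).2 hf0
  have hzero := hG c hc (by
    filter_upwards [hfc, ae_prod_count_iff.1 (hle.trans (Lp.coeFn_zero _ _ _).le)] with ω hω h
    exact hω ▸ h)
  refine (Lp.eq_zero_iff_ae_eq_zero).2 (ae_prod_count_iff.2 ?_)
  filter_upwards [hfc, hzero] with ω hω hzero i
  exact congrFun (hω.trans hzero.1) i

end L2

variable [Fintype κ] [IsFiniteMeasure P]

theorem IsArbitrageFree.exists_integral_dotProduct_nonneg (hG : G.IsArbitrageFree P) :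
    ∃ ζ : Ω → κ → ℝ, Integrable ζ P ∧ (∀ᵐ ω ∂P, ∀ i, 0 < ζ ω i) ∧
      ∀ x ∈ G.cone P univ, Measurable x → (∃ c, ∀ ω, ‖x ω‖ ≤ c) → 0 ≤ ∫ ω, x ω ⬝ᵥ ζ ω ∂P := by
  classical
  let _ : MeasurableSpace κ := ⊤
  obtain ⟨z, hz, hzpos⟩ := exists_mem_innerDual_ae_pos (fun _ => hG.mem_l2Cone_of_nonneg)
    (fun _ => hG.adjoinOrthant.eq_zero_of_mem_l2Cone)
  have hzint : Integrable z (P.prod Measure.count) := (Lp.memLp z).integrable one_le_two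
  refine ⟨fun ω i => z (ω, i), Integrable.of_eval (Measure.ae_count_iff.1 hzint.prod_left_ae),
    ae_prod_count_iff.1 hzpos, fun x hx hxm ⟨c, hc⟩ => ?_⟩
  have hxLp : MemLp (fun p : Ω × κ => x p.1 p.2) 2 (P.prod Measure.count) := by
    refine MemLp.of_bound ?_ c (ae_of_all _ fun p => (norm_le_pi_norm _ _).trans (hc p.1))
    exact (measurable_from_prod_countable_left
      fun i => (measurable_pi_apply i).comp hxm).aestronglyMeasurable
  rw [← inner_toLp_eq_integral_dotProduct hxLp]
  exact hz (toLp_mem_l2Cone hxLp (cone_subset_cone_adjoinOrthant hx))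

theorem IsArbitrageFree.exists_density (hG : G.IsArbitrageFree P)
    (hvec : ∀ k, Measurable[G.info k] (G.vec k)) :
    ∃ ζ : Ω → κ → ℝ, Integrable ζ P ∧ (∀ᵐ ω ∂P, ∀ i, 0 < ζ ω i) ∧
      ∀ k, ∀ᵐ ω ∂P, 0 ≤ G.vec k ω ⬝ᵥ (P[ζ|G.info k]) ω := by
  obtain ⟨ζ, hζ, hζpos, hcone⟩ := hG.exists_integral_dotProduct_nonneg
  refine ⟨ζ, hζ, hζpos, fun k => ?_⟩
  refine ae_bilin_condExp_nonneg_of_forall_setIntegral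
    (dotProductBilin ℝ ℝ).toContinuousBilinearMap (G.info_le k) (hvec k).stronglyMeasurable hζ
    fun s hs => ?_
  set l : Ω → ℝ := s.indicator fun ω => (1 + ‖G.vec k ω‖)⁻¹
  have hl : Measurable[G.info k] l := ((measurable_norm.comp (hvec k)).const_add 1).inv.indicator hs
  have hl0 (ω : Ω) : 0 ≤ l ω := indicator_nonneg (fun _ _ => by positivity) ω
  have hbound (ω : Ω) : ‖(l • G.vec k) ω‖ ≤ 1 := by
    rw [Pi.smul_apply', norm_smul, Real.norm_of_nonneg (hl0 ω)]
    by_cases hω : ω ∈ s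
    · simpa [l, hω] using inv_mul_le_one_of_le₀ (by simp) (by positivity)
    · simp [l, hω]
  refine (hcone (l • G.vec k) (smul_vec_mem_cone (mem_univ k) hl fun ω _ => hl0 ω)
    ((hl.smul (hvec k)).mono (G.info_le k) le_rfl) ⟨1, hbound⟩).trans_eq ?_
  rw [← integral_indicator (G.info_le k s hs)]
  refine integral_congr_ae (ae_of_all _ fun ω => ?_)
  by_cases hω : ω ∈ s <;> simp [l, hω]

end ConicFamily

/-! ### Bid-ask matrices -/

section IntrinsicInterior

variable {E : Type*} [AddCommGroup E] [Module ℝ E] [TopologicalSpace E] {C U : Set E} {w x : E}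

theorem mem_intrinsicInterior_of_isOpen (hU : IsOpen U) (hUC : U ∩ affineSpan ℝ C ⊆ C)
    (hwU : w ∈ U) (hw : w ∈ C) : w ∈ intrinsicInterior ℝ C := by
  refine mem_intrinsicInterior.2 ⟨⟨w, subset_affineSpan ℝ C hw⟩, ?_, rfl⟩
  exact mem_interior.2 ⟨_, fun v hv => hUC ⟨hv, v.2⟩, hU.preimage continuous_subtype_val, hwU⟩

theorem exists_add_smul_sub_mem_of_mem_intrinsicInterior [IsTopologicalAddGroup E]
    [ContinuousSMul ℝ E] (hw : w ∈ intrinsicInterior ℝ C)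
    (hx : x ∈ C) : ∃ ε : ℝ, 0 < ε ∧ w + ε • (w - x) ∈ C := by
  obtain ⟨y, hy, rfl⟩ := mem_intrinsicInterior.1 hw
  have hmem (ε : ℝ) : (y : E) + ε • ((y : E) - x) ∈ affineSpan ℝ C := by
    have := AffineMap.lineMap_mem (1 + ε) (subset_affineSpan ℝ C hx) y.2
    rw [AffineMap.lineMap_apply_module'] at this
    convert this using 1
    module
  let ray (ε : ℝ) : affineSpan ℝ C := ⟨(y : E) + ε • ((y : E) - x), hmem ε⟩
  have hray : Tendsto ray (𝓝[>] 0) (𝓝 y) := by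
    have hcont : Continuous ray := by fun_prop
    have hzero : ray 0 = y := by ext; simp [ray]
    exact hzero ▸ hcont.continuousWithinAt
  obtain ⟨ε, hε, hεC⟩ := (eventually_mem_nhdsWithin.and (hray.eventually_mem
    (mem_interior_iff_mem_nhds.1 hy))).exists
  exact ⟨ε, hε, hεC⟩

theorem mem_intrinsicInterior_Icc_iff {a b p : ℝ} (hab : a ≤ b) :
    p ∈ intrinsicInterior ℝ (Icc a b) ↔ p ∈ Icc a b ∧ (a ≠ b → p ∈ Ioo a b) := by
  obtain rfl | hlt := hab.eq_or_lt
  · simp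
  refine ⟨fun hp => ?_, fun hp => ?_⟩
  · have hpI := intrinsicInterior_subset hp
    obtain ⟨ε, hε, h⟩ := exists_add_smul_sub_mem_of_mem_intrinsicInterior hp (right_mem_Icc.2 hab)
    obtain ⟨δ, hδ, h'⟩ := exists_add_smul_sub_mem_of_mem_intrinsicInterior hp (left_mem_Icc.2 hab)
    refine ⟨hpI, fun _ => ⟨hpI.1.lt_of_ne ?_, hpI.2.lt_of_ne ?_⟩⟩
    · rintro rfl
      have := h.1
      simp only [smul_eq_mul] at this
      nlinarith
    · rintro rfl
      have := h'.2
      simp only [smul_eq_mul] at this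
      nlinarith
  · refine interior_subset_intrinsicInterior ?_
    rw [interior_Icc]
    exact hp.2 hlt.ne

end IntrinsicInterior

section SolvencyCone

variable {d : ℕ} {M : Matrix (Fin d) (Fin d) ℝ} {x y w : Fin d → ℝ}

theorem subset_generatedClosedCone (S : Set (Fin d → ℝ)) : S ⊆ generatedClosedCone S :=
  subset_sInter fun _ hC => hC.1

theorem mem_dualCone'_iff {K : Set (Fin d → ℝ)} : w ∈ dualCone' K ↔ ∀ x ∈ K, 0 ≤ x ⬝ᵥ w :=
  Iff.rfl

theorem dualCone'_generatedClosedCone (S : Set (Fin d → ℝ)) :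
    dualCone' (generatedClosedCone S) = dualCone' S := by
  refine Subset.antisymm (fun w hw x hx => hw x (subset_generatedClosedCone S hx))
    fun w hw x hx => ?_
  refine mem_sInter.1 hx {x | 0 ≤ x ⬝ᵥ w} ⟨hw, ?_, ?_, fun x hx c hc => ?_⟩
  · exact isClosed_le continuous_const (continuous_id.dotProduct continuous_const)
  · exact convex_halfSpace_ge ((dotProductBilin ℝ ℝ).flip w).isLinear 0
  · rw [mem_ofPred_eq, smul_dotProduct]
    exact mul_nonneg hc hx

theorem mem_dualCone'_solvencyCone_iff :
    w ∈ dualCone' (solvencyCone M) ↔ (∀ i, 0 ≤ w i) ∧ ∀ i j, w j ≤ M i j * w i := by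
  rw [solvencyCone, dualCone'_generatedClosedCone, mem_dualCone'_iff]
  simp only [mem_union, or_imp, forall_and, forall_mem_range]
  refine and_congr (by simp) ⟨fun h i j => ?_, ?_⟩
  · simpa [sub_dotProduct, smul_dotProduct] using h _ ⟨i, j, rfl⟩
  · rintro h _ ⟨i, j, rfl⟩
    simpa [sub_dotProduct, smul_dotProduct] using h i j

theorem smul_mem_solvencyCone {c : ℝ} (hc : 0 ≤ c) (hx : x ∈ solvencyCone M) :
    c • x ∈ solvencyCone M :=
  mem_sInter.2 fun C hC => hC.2.2.2 x (mem_sInter.1 hx C hC) c hc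

theorem add_mem_solvencyCone (hx : x ∈ solvencyCone M) (hy : y ∈ solvencyCone M) :
    x + y ∈ solvencyCone M := by
  have hmid : midpoint ℝ x y ∈ solvencyCone M := mem_sInter.2 fun C hC =>
    hC.2.2.1.midpoint_mem (mem_sInter.1 hx C hC) (mem_sInter.1 hy C hC)
  have := smul_mem_solvencyCone zero_le_two hmid
  rwa [two_smul, midpoint_add_self] at this

theorem smul_single_sub_single_mem_solvencyCone (M : Matrix (Fin d) (Fin d) ℝ) (i j : Fin d) :
    M i j • (Pi.single i 1 : Fin d → ℝ) - Pi.single j 1 ∈ solvencyCone M :=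
  subset_generatedClosedCone _ (.inr ⟨i, j, rfl⟩)

theorem zero_mem_solvencyCone [NeZero d] (M : Matrix (Fin d) (Fin d) ℝ) : 0 ∈ solvencyCone M := by
  simpa using smul_mem_solvencyCone le_rfl (smul_single_sub_single_mem_solvencyCone M 0 0)

theorem sum_mem_solvencyCone [NeZero d] {κ : Type*} {s : Finset κ} {f : κ → Fin d → ℝ}
    (hf : ∀ k ∈ s, f k ∈ solvencyCone M) : ∑ k ∈ s, f k ∈ solvencyCone M :=
  Finset.sum_induction f (· ∈ solvencyCone M) (fun _ _ => add_mem_solvencyCone)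
    (zero_mem_solvencyCone M) hf

theorem smul_smul_single_sub_single_mem_solvencyCone {i j : Fin d} (hM : 0 ≤ M i j)
    (hij : M i j * M j i = 1) (c : ℝ) :
    c • (M i j • (Pi.single i 1 : Fin d → ℝ) - Pi.single j 1) ∈ solvencyCone M := by
  obtain hc | hc := le_total 0 c
  · exact smul_mem_solvencyCone hc (smul_single_sub_single_mem_solvencyCone M i j)
  · have hreverse : c • (M i j • (Pi.single i 1 : Fin d → ℝ) - Pi.single j 1) =
        (-c * M i j) • (M j i • (Pi.single j 1 : Fin d → ℝ) - Pi.single i 1) := by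
      rw [smul_sub, smul_sub, smul_smul, smul_smul, mul_assoc, hij]
      module
    rw [hreverse]
    exact smul_mem_solvencyCone (mul_nonneg (neg_nonneg.2 hc) hM)
      (smul_single_sub_single_mem_solvencyCone M j i)

theorem eq_mul_of_mem_affineSpan_dualCone' {i j : Fin d} (hM : 0 < M i j)
    (hij : M i j * M j i = 1) (hw : w ∈ affineSpan ℝ (dualCone' (solvencyCone M))) :
    w j = M i j * w i := by
  let φ : (Fin d → ℝ) →ₗ[ℝ] ℝ := LinearMap.proj j - M i j • LinearMap.proj i
  have hle : affineSpan ℝ (dualCone' (solvencyCone M)) ≤ (LinearMap.ker φ).toAffineSubspace := by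
    refine affineSpan_le.2 fun u hu => ?_
    have hu' := (mem_dualCone'_solvencyCone_iff.1 hu).2
    have hrev := mul_le_mul_of_nonneg_left (hu' j i) hM.le
    rw [← mul_assoc, hij, one_mul] at hrev
    exact sub_eq_zero.2 ((hu' i j).antisymm hrev)
  exact sub_eq_zero.1 (hle hw)

namespace IsBidAskMatrix

variable (hM : IsBidAskMatrix M)
include hM

theorem one_le_mul (i j : Fin d) : 1 ≤ M i j * M j i :=
  hM.2.1 i ▸ hM.2.2 i i j

theorem row_mem_dualCone' (i : Fin d) : M i ∈ dualCone' (solvencyCone M) :=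
  mem_dualCone'_solvencyCone_iff.2 ⟨fun j => (hM.1 i j).le, fun j k => by
    rw [mul_comm]
    exact hM.2.2 i k j⟩

theorem mem_intrinsicInterior_dualCone'_iff :
    w ∈ intrinsicInterior ℝ (dualCone' (solvencyCone M)) ↔
      (∀ i, 0 < w i) ∧ (∀ i j, w j ≤ M i j * w i) ∧
        ∀ i j, M i j * M j i ≠ 1 → w j < M i j * w i := by
  refine ⟨fun hw => ⟨fun i => ?_,
    (mem_dualCone'_solvencyCone_iff.1 (intrinsicInterior_subset hw)).2, fun i j hij => ?_⟩,
    fun ⟨hpos, hle, hlt⟩ => ?_⟩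
  · obtain ⟨ε, hε, h⟩ :=
      exists_add_smul_sub_mem_of_mem_intrinsicInterior hw (hM.row_mem_dualCone' i)
    have hi := (mem_dualCone'_solvencyCone_iff.1 h).1 i
    simp only [Pi.add_apply, Pi.smul_apply, Pi.sub_apply, smul_eq_mul, hM.2.1 i] at hi
    nlinarith
  · obtain ⟨ε, hε, h⟩ :=
      exists_add_smul_sub_mem_of_mem_intrinsicInterior hw (hM.row_mem_dualCone' j)
    have hij' := (mem_dualCone'_solvencyCone_iff.1 h).2 i j
    simp only [Pi.add_apply, Pi.smul_apply, Pi.sub_apply, smul_eq_mul, hM.2.1 j] at hij'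
    have hlt : 1 < M i j * M j i := (hM.one_le_mul i j).lt_of_ne' hij
    nlinarith
  · have hw : w ∈ dualCone' (solvencyCone M) :=
      mem_dualCone'_solvencyCone_iff.2 ⟨fun i => (hpos i).le, hle⟩
    refine mem_intrinsicInterior_of_isOpen
      (U := {v | (∀ i, 0 < v i) ∧ ∀ i j, M i j * M j i ≠ 1 → v j < M i j * v i})
      ?_ ?_ ⟨hpos, hlt⟩ hw
    · simp only [ofPred_and, ofPred_forall]
      refine .inter
        (isOpen_iInter_of_finite fun i => isOpen_lt continuous_const (continuous_apply i))
        (isOpen_iInter_of_finite fun i => isOpen_iInter_of_finite fun j =>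
          isOpen_iInter_of_finite fun _ => isOpen_lt (continuous_apply j) (by fun_prop))
    · rintro v ⟨⟨hv0, hv⟩, hvaff⟩
      refine mem_dualCone'_solvencyCone_iff.2 ⟨fun i => (hv0 i).le, fun i j => ?_⟩
      by_cases hij : M i j * M j i = 1
      · exact (eq_mul_of_mem_affineSpan_dualCone' (hM.1 i j) hij hvaff).le
      · exact (hv i j hij).le

theorem eq_and_lt_of_Icc_subset {N : Matrix (Fin d) (Fin d) ℝ} (hN : IsBidAskMatrix N) {i j : Fin d}
    (h : Icc (1 / N j i) (N i j) ⊆ intrinsicInterior ℝ (Icc (1 / M j i) (M i j))) :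
    (M i j * M j i = 1 → N i j = M i j) ∧ (M i j * M j i ≠ 1 → N i j < M i j) := by
  have hle : 1 / M j i ≤ M i j := (div_le_iff₀ (hM.1 j i)).2 (hM.one_le_mul i j)
  have hmem := (mem_intrinsicInterior_Icc_iff hle).1
    (h (right_mem_Icc.2 ((div_le_iff₀ (hN.1 j i)).2 (hN.one_le_mul i j))))
  refine ⟨fun hij => hmem.1.2.antisymm ?_, fun hij => (hmem.2 fun heq => hij ?_).2⟩
  · rw [eq_div_of_mul_eq (hM.1 j i).ne' hij]
    exact hmem.1.1
  · rw [← heq, one_div_mul_cancel (hM.1 j i).ne']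

end IsBidAskMatrix

end SolvencyCone

/-- The matrix of the frictionless exchange rates `y j / y i` at prices `y`. -/
noncomputable def priceMatrix {d : ℕ} (y : Fin d → ℝ) : Matrix (Fin d) (Fin d) ℝ :=
  Matrix.of fun i j => y j / y i

section PriceMatrix

variable {d : ℕ} {M : Matrix (Fin d) (Fin d) ℝ} {y : Fin d → ℝ}

theorem isBidAskMatrix_priceMatrix (hy : ∀ i, 0 < y i) : IsBidAskMatrix (priceMatrix y) :=
  ⟨fun _ _ => div_pos (hy _) (hy _), fun i => div_self (hy i).ne',
    fun _ _ k => (div_mul_div_cancel₀' (hy k).ne' _ _).ge⟩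

theorem mem_dualCone'_solvencyCone_priceMatrix (hy : ∀ i, 0 < y i) :
    y ∈ dualCone' (solvencyCone (priceMatrix y)) :=
  mem_dualCone'_solvencyCone_iff.2
    ⟨fun i => (hy i).le, fun i j => (div_mul_cancel₀ (y j) (hy i).ne').ge⟩

theorem IsBidAskMatrix.Icc_priceMatrix_subset (hM : IsBidAskMatrix M)
    (hy : y ∈ intrinsicInterior ℝ (dualCone' (solvencyCone M))) (i j : Fin d) :
    Icc (1 / priceMatrix y j i) (priceMatrix y i j) ⊆
      intrinsicInterior ℝ (Icc (1 / M j i) (M i j)) := by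
  obtain ⟨hpos, hle, hlt⟩ := hM.mem_intrinsicInterior_dualCone'_iff.1 hy
  have hle_one := hM.one_le_mul i j
  rw [priceMatrix, Matrix.of_apply, Matrix.of_apply, one_div_div, Icc_self, singleton_subset_iff,
    mem_intrinsicInterior_Icc_iff ((div_le_iff₀ (hM.1 j i)).2 hle_one)]
  simp only [mem_Icc, mem_Ioo, div_le_div_iff₀ (hM.1 j i) (hpos i), div_le_iff₀ (hpos i),
    div_lt_div_iff₀ (hM.1 j i) (hpos i), div_lt_iff₀ (hpos i), one_mul, mul_comm (y j)]
  refine ⟨⟨hle j i, hle i j⟩, fun hne => ?_⟩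
  have hij : M i j * M j i ≠ 1 := fun h => hne ((div_eq_iff (hM.1 j i).ne').2 h.symm)
  exact ⟨hlt j i (mul_comm (M i j) _ ▸ hij), hlt i j hij⟩

end PriceMatrix

/-! ### Strictly consistent price processes exclude arbitrage -/

section Martingale

variable {Ω : Type*} {m : MeasurableSpace Ω} {P : Measure Ω} {T : ℕ}
  {ℱ : Filtration (Fin (T + 1)) m}

theorem Iic_fin_succ_eq_insert (t : Fin T) :
    Finset.Iic t.succ = insert t.succ (Finset.Iic t.castSucc) := by
  ext s
  simp only [Finset.mem_Iic, Finset.mem_insert, Fin.le_def, Fin.ext_iff, Fin.val_succ,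
    Fin.val_castSucc]
  omega

theorem ae_bilin_sum_eq_zero_of_martingale {E F : Type*} [NormedAddCommGroup E] [NormedSpace ℝ E]
    [CompleteSpace E] [NormedAddCommGroup F] [NormedSpace ℝ F] [SigmaFiniteFiltration P ℱ]
    (B : F →L[ℝ] E →L[ℝ] ℝ) {X : Fin (T + 1) → Ω → F} {Z : Fin (T + 1) → Ω → E}
    (hZ : Martingale Z ℱ P) (hX : StronglyAdapted ℱ X) (hXZ : ∀ t, ∀ᵐ ω ∂P, B (X t ω) (Z t ω) ≤ 0)
    (hsum : ∀ᵐ ω ∂P, 0 ≤ B (∑ t, X t ω) (Z (Fin.last T) ω)) :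
    ∀ᵐ ω ∂P, B (∑ t, X t ω) (Z (Fin.last T) ω) = 0 := by
  set S : Fin (T + 1) → Ω → F := fun t ω => ∑ s ∈ Finset.Iic t, X s ω
  have hS (t : Fin (T + 1)) : StronglyMeasurable[ℱ t] (S t) :=
    Finset.stronglyMeasurable_fun_sum _ fun s hs => (hX s).mono (ℱ.mono (Finset.mem_Iic.1 hs))
  have hSlast : S (Fin.last T) = fun ω => ∑ t, X t ω := by
    have : Finset.Iic (Fin.last T) = Finset.univ := Finset.Iic_top
    simp only [S, this]
  have hback (t : Fin (T + 1)) : ∀ᵐ ω ∂P, 0 ≤ B (S t ω) (Z t ω) ∧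
      (B (S t ω) (Z t ω) = 0 → B (∑ t, X t ω) (Z (Fin.last T) ω) = 0) := by
    induction t using Fin.reverseInduction with
    | last => simpa only [hSlast, imp_self, and_true] using hsum
    | cast t ih =>
      have hstep (ω : Ω) : B (S t.succ ω) (Z t.succ ω) =
          B (X t.succ ω) (Z t.succ ω) + B (S t.castSucc ω) (Z t.succ ω) := by
        simp only [S, Iic_fin_succ_eq_insert]
        rw [Finset.sum_insert (by simp [Fin.le_def]), map_add, add_apply]
      have hnonneg : ∀ᵐ ω ∂P, 0 ≤ B (S t.castSucc ω) (Z t.succ ω) := by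
        filter_upwards [ih, hXZ t.succ] with ω hω hle
        linarith [hω.1, hstep ω]
      filter_upwards [ih, hXZ t.succ, hZ.condExp_ae_eq (Fin.castSucc_le_succ t),
        ae_bilin_condExp_nonneg B (ℱ.le _) (hS _) (hZ.integrable _) hnonneg,
        ae_bilin_eq_zero_of_bilin_condExp_eq_zero B (ℱ.le _) (hS _) (hZ.integrable _) hnonneg]
        with ω hω hle hmart hcond hzero
      rw [hmart] at hcond hzero
      refine ⟨hcond, fun h => hω.2 (le_antisymm ?_ hω.1)⟩
      rw [hstep, hzero h, add_zero]
      exact hle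
  filter_upwards [hback 0, hXZ 0] with ω hω hle
  have hIic : Finset.Iic (0 : Fin (T + 1)) = {0} := Finset.Iic_bot
  have hS0 : S 0 ω = X 0 ω := by simp [S, hIic]
  exact hω.2 (le_antisymm (hS0 ▸ hle) hω.1)

end Martingale

theorem exists_measurable_mem_ae_eq {Ω α : Type*} [MeasurableSpace α] {H m : MeasurableSpace Ω}
    {P : Measure Ω}
    {f : Ω → α} {s : Set α} (hf : Measurable[H] f) (hs : MeasurableSet s) (hne : s.Nonempty)
    (h : ∀ᵐ ω ∂P, f ω ∈ s) : ∃ g : Ω → α, Measurable[H] g ∧ (∀ ω, g ω ∈ s) ∧ g =ᵐ[P] f := by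
  classical
  obtain ⟨a, ha⟩ := hne
  refine ⟨(f ⁻¹' s).piecewise f fun _ => a, hf.piecewise (hf hs) measurable_const, fun ω => ?_,
    h.mono fun ω hω => piecewise_eq_of_mem _ _ _ hω⟩
  by_cases hω : ω ∈ f ⁻¹' s
  · rwa [piecewise_eq_of_mem _ _ _ hω]
  · rwa [piecewise_eq_of_notMem _ _ _ hω]

section BidAskProcess

variable {Ω : Type*} {d T : ℕ} {m : MeasurableSpace Ω} {P : Measure Ω}
  {ℱ : Filtration (Fin (T + 1)) m}

/-- The no-arbitrage condition for the bid-ask process `M`: the only nonnegative attainable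
terminal portfolio is zero. -/
def NoArbitrage (P : Measure Ω) (ℱ : Filtration (Fin (T + 1)) m)
    (M : Fin (T + 1) → Ω → Matrix (Fin d) (Fin d) ℝ) : Prop :=
  ∀ x : Ω → Fin d → ℝ, MemAttainable P ℱ M x →
    MemL0 P (ℱ (Fin.last T)) (fun _ => {v | ∀ i, 0 ≤ v i}) x → ∀ᵐ ω ∂P, x ω = 0

theorem noArbitrage_of_martingale [IsFiniteMeasure P]
    {M : Fin (T + 1) → Ω → Matrix (Fin d) (Fin d) ℝ} {Z : Fin (T + 1) → Ω → Fin d → ℝ}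
    (hZ : Martingale Z ℱ P) (hpos : ∀ᵐ ω ∂P, ∀ i, 0 < Z (Fin.last T) ω i)
    (hdual : ∀ t, ∀ᵐ ω ∂P, Z t ω ∈ dualCone' (solvencyCone (M t ω))) : NoArbitrage P ℱ M := by
  rintro x ⟨xs, hxs, hsum⟩ ⟨-, hx⟩
  have hvalue : ∀ᵐ ω ∂P, x ω ⬝ᵥ Z (Fin.last T) ω = 0 := by
    simp only [← hsum] at hx ⊢
    refine ae_bilin_sum_eq_zero_of_martingale (dotProductBilin ℝ ℝ).toContinuousBilinearMap hZ
      (fun t => (hxs t).1.stronglyMeasurable) (fun t => ?_) ?_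
    · filter_upwards [(hxs t).2, hdual t] with ω hω hZω
      have := mem_dualCone'_iff.1 hZω _ hω
      rwa [neg_dotProduct, Left.nonneg_neg_iff] at this
    · filter_upwards [hx, hpos] with ω hω hZω
      exact dotProduct_nonneg_of_nonneg hω fun i => (hZω i).le
  filter_upwards [hvalue, hx, hpos] with ω hω hxω hZω
  ext i
  have hterm := (Finset.sum_eq_zero_iff_of_nonneg fun i _ =>
    mul_nonneg (hxω i) (hZω i).le).1 hω i (Finset.mem_univ i)
  exact (mul_eq_zero_iff_right (hZω i).ne').1 hterm

theorem robustNoArbitrage_of_martingale [IsFiniteMeasure P]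
    {M : Fin (T + 1) → Ω → Matrix (Fin d) (Fin d) ℝ} (hM : ∀ t ω, IsBidAskMatrix (M t ω))
    {Z : Fin (T + 1) → Ω → Fin d → ℝ} (hZ : Martingale Z ℱ P)
    (hri : ∀ t, ∀ᵐ ω ∂P, Z t ω ∈ intrinsicInterior ℝ (dualCone' (solvencyCone (M t ω)))) :
    RobustNoArbitrage P ℱ M := by
  have hZpos (t : Fin (T + 1)) : ∀ᵐ ω ∂P, ∀ i, 0 < Z t ω i :=
    (hri t).mono fun ω hω => ((hM t ω).mem_intrinsicInterior_dualCone'_iff.1 hω).1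
  have hversion (t : Fin (T + 1)) : ∃ Y : Ω → Fin d → ℝ,
      Measurable[ℱ t] Y ∧ (∀ ω, Y ω ∈ univ.pi fun _ => Ioi 0) ∧ Y =ᵐ[P] Z t :=
    exists_measurable_mem_ae_eq (hZ.1 t).measurable (.univ_pi fun _ => measurableSet_Ioi)
      ⟨1, fun _ _ => one_pos (α := ℝ)⟩ ((hZpos t).mono fun _ hω i _ => hω i)
  choose Y hYm hY hYZ using hversion
  have hYpos (t : Fin (T + 1)) (ω : Ω) (i : Fin d) : 0 < Y t ω i := hY t ω i (mem_univ i)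
  have hYmi (t : Fin (T + 1)) (i : Fin d) : Measurable[ℱ t] fun ω => Y t ω i :=
    (measurable_pi_apply i).comp (hYm t)
  refine ⟨fun t ω => priceMatrix (Y t ω), fun t i j => (hYmi t j).div (hYmi t i),
    fun t ω => isBidAskMatrix_priceMatrix (hYpos t ω), fun t i j => ?_,
    noArbitrage_of_martingale hZ (hZpos _) fun t => ?_⟩
  · filter_upwards [hri t, hYZ t] with ω hω hYω
    exact (hM t ω).Icc_priceMatrix_subset (hYω ▸ hω) i j
  · filter_upwards [hYZ t] with ω hYω
    exact hYω ▸ mem_dualCone'_solvencyCone_priceMatrix (hYpos t ω)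

/-! ### Strictly consistent price processes from robust no-arbitrage -/

/-- The exchanges at the rates `Q`: the unit exchange of asset `i` into asset `j` at time `t` has
the price vector `Q t i j • eᵢ - eⱼ`, and it may be reversed when asset `i` and asset `j` can be
exchanged without friction under `M`. -/
def exchangeFamily (ℱ : Filtration (Fin (T + 1)) m)
    (M Q : Fin (T + 1) → Ω → Matrix (Fin d) (Fin d) ℝ)
    (hM : ∀ t i j, Measurable[ℱ t] fun ω => M t ω i j) :
    ConicFamily m (Fin (T + 1) × Fin d × Fin d) (Fin d → ℝ) where
  info k := ℱ k.1
  info_le k := ℱ.le k.1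
  info_total k l := (le_total k.1 l.1).imp (fun h => ℱ.mono h) fun h => ℱ.mono h
  vec k ω := Q k.1 ω k.2.1 k.2.2 • Pi.single k.2.1 1 - Pi.single k.2.2 1
  oneSided k := {ω | M k.1 ω k.2.1 k.2.2 * M k.1 ω k.2.2 k.2.1 ≠ 1}
  measurableSet_oneSided _ :=
    (measurableSet_eq_fun ((hM _ _ _).mul (hM _ _ _)) measurable_const).compl

variable {M N Q : Fin (T + 1) → Ω → Matrix (Fin d) (Fin d) ℝ}
  {hM : ∀ t i j, Measurable[ℱ t] fun ω => M t ω i j}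

theorem MemAttainable.measurable {x : Ω → Fin d → ℝ} (hx : MemAttainable P ℱ M x) :
    Measurable[ℱ (Fin.last T)] x := by
  obtain ⟨xs, hxs, hsum⟩ := hx
  rw [← funext hsum]
  exact Finset.measurable_fun_sum _ fun t _ => (hxs t).1.mono (ℱ.mono t.le_last) le_rfl

theorem combine_exchangeFamily_eq_add (c : Fin (T + 1) × Fin d × Fin d → Ω → ℝ) (ω : Ω) :
    (exchangeFamily ℱ M Q hM).combine c ω = (exchangeFamily ℱ M N hM).combine c ω +
      ∑ k, (c k ω * (Q k.1 ω k.2.1 k.2.2 - N k.1 ω k.2.1 k.2.2)) • Pi.single k.2.1 1 := by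
  simp only [ConicFamily.combine, exchangeFamily, ← Finset.sum_add_distrib]
  exact Finset.sum_congr rfl fun k _ => by module

theorem memAttainable_neg_combine_exchangeFamily [NeZero d]
    (hN : ∀ t i j, Measurable[ℱ t] fun ω => N t ω i j) (hN0 : ∀ t ω i j, 0 ≤ N t ω i j)
    (hMN : ∀ᵐ ω ∂P, ∀ t i j, M t ω i j * M t ω j i = 1 → N t ω i j * N t ω j i = 1)
    {c : Fin (T + 1) × Fin d × Fin d → Ω → ℝ} (hc : (exchangeFamily ℱ M N hM).IsAdmissible c) :
    MemAttainable P ℱ N fun ω => -(exchangeFamily ℱ M N hM).combine c ω := by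
  refine ⟨fun t ω => -∑ p : Fin d × Fin d, c (t, p) ω • (exchangeFamily ℱ M N hM).vec (t, p) ω,
    fun t => ⟨?_, ?_⟩, fun ω => ?_⟩
  · refine (Finset.measurable_fun_sum _ fun p _ => ?_).neg
    exact (hc.1 (t, p)).smul (((hN t p.1 p.2).smul_const _).sub_const _)
  · filter_upwards [hMN] with ω hω
    rw [Set.neg_mem_neg]
    refine sum_mem_solvencyCone fun p _ => ?_
    by_cases hp : M t ω p.1 p.2 * M t ω p.2 p.1 = 1
    · exact smul_smul_single_sub_single_mem_solvencyCone (hN0 t ω p.1 p.2) (hω t p.1 p.2 hp) _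
    · exact smul_mem_solvencyCone (hc.2 (t, p) ω hp)
        (smul_single_sub_single_mem_solvencyCone _ _ _)
  · simp only [Finset.sum_neg_distrib, ConicFamily.combine, Fintype.sum_prod_type]

theorem NoArbitrage.isArbitrageFree_exchangeFamily [NeZero d] (hN : NoArbitrage P ℱ N)
    (hNm : ∀ t i j, Measurable[ℱ t] fun ω => N t ω i j) (hN0 : ∀ t ω i j, 0 ≤ N t ω i j)
    (hMN : ∀ᵐ ω ∂P, ∀ t i j, M t ω i j * M t ω j i = 1 → N t ω i j * N t ω j i = 1)
    (heq : ∀ᵐ ω ∂P, ∀ t i j, M t ω i j * M t ω j i = 1 → N t ω i j = Q t ω i j)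
    (hlt : ∀ᵐ ω ∂P, ∀ t i j, M t ω i j * M t ω j i ≠ 1 → N t ω i j < Q t ω i j) :
    (exchangeFamily ℱ M Q hM).IsArbitrageFree P := by
  intro c hc hle
  have hatt := memAttainable_neg_combine_exchangeFamily (hM := hM) hNm hN0 hMN hc
  let slack (ω : Ω) (k : Fin (T + 1) × Fin d × Fin d) : Fin d → ℝ :=
    (c k ω * (Q k.1 ω k.2.1 k.2.2 - N k.1 ω k.2.1 k.2.2)) • Pi.single k.2.1 1
  have hdecomp (ω : Ω) : (exchangeFamily ℱ M Q hM).combine c ω =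
      (exchangeFamily ℱ M N hM).combine c ω + ∑ k, slack ω k := combine_exchangeFamily_eq_add c ω
  have hslack : ∀ᵐ ω ∂P, ∀ k, 0 ≤ slack ω k := by
    filter_upwards [heq, hlt] with ω heq hlt k
    refine smul_nonneg ?_ (Pi.single_nonneg.2 zero_le_one)
    by_cases hk : M k.1 ω k.2.1 k.2.2 * M k.1 ω k.2.2 k.2.1 = 1
    · rw [heq _ _ _ hk, sub_self, mul_zero]
    · exact mul_nonneg (hc.2 k ω hk) (sub_nonneg.2 (hlt _ _ _ hk).le)
  have hgain : ∀ᵐ ω ∂P, -(exchangeFamily ℱ M N hM).combine c ω = 0 := by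
    refine hN _ hatt ⟨hatt.measurable, ?_⟩
    filter_upwards [hle, hslack] with ω hω hs i
    have hi := hω i
    have hsi := Finset.sum_nonneg (s := .univ) (fun k _ => hs k) i
    simp only [hdecomp, Pi.add_apply, Pi.zero_apply, Pi.neg_apply] at hi hsi ⊢
    linarith
  filter_upwards [hle, hslack, hgain, hlt] with ω hω hs hgain hlt
  rw [hdecomp, neg_eq_zero.1 hgain, zero_add] at hω ⊢
  have hsum : ∑ k, slack ω k = 0 := le_antisymm hω (Finset.sum_nonneg fun k _ => hs k)
  refine ⟨hsum, fun k hk => ?_⟩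
  have hk0 := (Finset.sum_eq_zero_iff_of_nonneg fun k _ => hs k).1 hsum k (Finset.mem_univ k)
  simpa [slack, (sub_pos.2 (hlt _ _ _ hk)).ne'] using hk0

theorem RobustNoArbitrage.exists_isArbitrageFree_exchangeFamily [NeZero d]
    (h : RobustNoArbitrage P ℱ M) (hM : ∀ t i j, Measurable[ℱ t] fun ω => M t ω i j)
    (hMba : ∀ t ω, IsBidAskMatrix (M t ω)) :
    ∃ Q : Fin (T + 1) → Ω → Matrix (Fin d) (Fin d) ℝ,
      (∀ t i j, Measurable[ℱ t] fun ω => Q t ω i j) ∧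
      (∀ᵐ ω ∂P, ∀ t i j, Q t ω i j ≤ M t ω i j) ∧
      (∀ᵐ ω ∂P, ∀ t i j, M t ω i j * M t ω j i ≠ 1 → Q t ω i j < M t ω i j) ∧
      (exchangeFamily ℱ M Q hM).IsArbitrageFree P := by
  obtain ⟨N, hNm, hNba, hri, hN⟩ := h
  have hNM : ∀ᵐ ω ∂P, ∀ t i j, (M t ω i j * M t ω j i = 1 → N t ω i j = M t ω i j) ∧
      (M t ω i j * M t ω j i ≠ 1 → N t ω i j < M t ω i j) := by
    refine ae_all_iff.2 fun t => ae_all_iff.2 fun i => ae_all_iff.2 fun j => ?_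
    exact (hri t i j).mono fun ω => (hMba t ω).eq_and_lt_of_Icc_subset (hNba t ω)
  refine ⟨fun t ω => Matrix.of fun i j => (N t ω i j + M t ω i j) / 2,
    fun t i j => ((hNm t i j).add (hM t i j)).div_const 2, ?_, ?_,
    NoArbitrage.isArbitrageFree_exchangeFamily hN hNm (fun t ω i j => ((hNba t ω).1 i j).le)
      ?_ ?_ ?_⟩ <;> filter_upwards [hNM] with ω hω t i j
  · by_cases hij : M t ω i j * M t ω j i = 1
    · simp [(hω t i j).1 hij]
    · exact (add_div_two_lt_right.2 ((hω t i j).2 hij)).le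
  · exact fun hij => add_div_two_lt_right.2 ((hω t i j).2 hij)
  · intro hij
    rwa [(hω t i j).1 hij, (hω t j i).1 (mul_comm (M t ω i j) _ ▸ hij)]
  · intro hij
    simp [(hω t i j).1 hij]
  · exact fun hij => left_lt_add_div_two.2 ((hω t i j).2 hij)

theorem exists_martingale_of_robustNoArbitrage [NeZero d] [IsFiniteMeasure P]
    (hM : ∀ t i j, Measurable[ℱ t] fun ω => M t ω i j) (hMba : ∀ t ω, IsBidAskMatrix (M t ω))
    (h : RobustNoArbitrage P ℱ M) :
    ∃ Z : Fin (T + 1) → Ω → Fin d → ℝ, Martingale Z ℱ P ∧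
      ∀ t, ∀ᵐ ω ∂P, Z t ω ∈ intrinsicInterior ℝ (dualCone' (solvencyCone (M t ω))) := by
  obtain ⟨Q, hQ, hQM, hQM_lt, hfree⟩ := h.exists_isArbitrageFree_exchangeFamily hM hMba
  obtain ⟨ζ, hζ, hζpos, hprice⟩ :=
    hfree.exists_density fun k => ((hQ k.1 _ _).smul_const _).sub_const _
  refine ⟨fun t => P[ζ|ℱ t], martingale_condExp ζ ℱ P, fun t => ?_⟩
  have hpos (i : Fin d) : ∀ᵐ ω ∂P, 0 < (P[ζ|ℱ t]) ω i :=
    ae_pos_condExp_of_ae_pos (ℱ.le t) hζ (.proj i) (hζpos.mono fun ω hω => hω i)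
  filter_upwards [ae_all_iff.2 hpos, ae_all_iff.2 hprice, hQM, hQM_lt]
    with ω hpos hprice hQM hQM_lt
  have hle (i j : Fin d) : (P[ζ|ℱ t]) ω j ≤ Q t ω i j * (P[ζ|ℱ t]) ω i := by
    simpa [exchangeFamily, sub_dotProduct, smul_dotProduct] using hprice (t, i, j)
  exact (hMba t ω).mem_intrinsicInterior_dualCone'_iff.2 ⟨hpos,
    fun i j => (hle i j).trans (mul_le_mul_of_nonneg_right (hQM t i j) (hpos i).le),
    fun i j hij => (hle i j).trans_lt (mul_lt_mul_of_pos_right (hQM_lt t i j hij) (hpos i))⟩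

end BidAskProcess

theorem robust_no_arbitrage_iff_strictly_consistent_general
    {Ω : Type*} {d T : ℕ} (hd : 1 ≤ d)
    {m : MeasurableSpace Ω} (P : Measure Ω) [IsFiniteMeasure P]
    (ℱ : Filtration (Fin (T + 1)) m)
    (Pi_ : Fin (T + 1) → Ω → Matrix (Fin d) (Fin d) ℝ)
    (hadapted : ∀ t i j, Measurable[ℱ t] fun ω => Pi_ t ω i j)
    (hba : ∀ t ω, IsBidAskMatrix (Pi_ t ω)) :
    RobustNoArbitrage P ℱ Pi_ ↔
      ∃ Z : Fin (T + 1) → Ω → Fin d → ℝ,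
        Martingale Z ℱ P ∧
        ∀ t, ∀ᵐ ω ∂P, Z t ω ∈
          intrinsicInterior ℝ (dualCone' (solvencyCone (Pi_ t ω))) :=
  have : NeZero d := ⟨Nat.one_le_iff_ne_zero.1 hd⟩
  ⟨exists_martingale_of_robustNoArbitrage hadapted hba,
    fun ⟨_, hZ, hri⟩ => robustNoArbitrage_of_martingale hba hZ hri⟩

/-- The robust no-arbitrage condition NAʳ holds iff there exists a strictly
consistent price process: an `ℝ^d`-valued `P`-martingale `Z` adapted to `(𝔉_t)`
with `Z_t(ω) ∈ ri K_t*(ω)` a.e. for every `t`. -/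
theorem robust_no_arbitrage_iff_strictly_consistent
    {Ω : Type*} {d T : ℕ} (hd : 1 ≤ d)
    {m : MeasurableSpace Ω} (P : Measure Ω) [IsProbabilityMeasure P]
    (ℱ : Filtration (Fin (T + 1)) m)
    (hcomplete : ∀ t : Fin (T + 1), ∀ s : Set Ω,
      MeasurableSet[m] s → P s = 0 → MeasurableSet[ℱ t] s)
    (Pi_ : Fin (T + 1) → Ω → Matrix (Fin d) (Fin d) ℝ)
    (hadapted : ∀ t i j, Measurable[ℱ t] fun ω => Pi_ t ω i j)
    (hba : ∀ t ω, IsBidAskMatrix (Pi_ t ω)) :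
    RobustNoArbitrage P ℱ Pi_ ↔
      ∃ Z : Fin (T + 1) → Ω → Fin d → ℝ,
        Martingale Z ℱ P ∧
        ∀ t, ∀ᵐ ω ∂P, Z t ω ∈
          intrinsicInterior ℝ (dualCone' (solvencyCone (Pi_ t ω))) :=
  robust_no_arbitrage_iff_strictly_consistent_general hd P ℱ Pi_ hadapted hba
end

section
/- Let (Ω,𝔉,P) be a probability space, (𝔉_t)_{t=0}^T a filtration of P-complete sub-σ-algebras, and (Π_t)_{t=0}^T a bid-ask process with solvency cones K_t(ω)=K(Π_t(ω)). Then the following are equivalent: (i) there exists an ℝ^d-valued P-martingale Z=(Z_t)_{t=0}^T adapted to (𝔉_t) with Z_t(ω) ∈ ri K_t*(ω) for a.e. ω and every t; (ii) whenever x_t ∈ L⁰(−K_t,𝔉_t) for t=0,…,T satisfy Σ_{t=0}^T x_t = 0 a.s., one has x_t(ω) ∈ K_t(ω) ∩ (−K_t(ω)) for a.e. ω, for every t=0,…,T. -/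
/-!
If `Z` is a consistent martingale and `∑ x_t = 0` with `x_t ∈ L⁰(K_t)`, conditioning on `𝔉_T`,
`𝔉_{T-1}`, … in turn shows that every `⟪x_t, Z_t⟫ ≥ 0` vanishes, and a point of `ri K_t*` is
orthogonal to `x ∈ K_t` only if `-x ∈ K_t`.

Conversely, the no-arbitrage condition makes `R = ∑ L⁰(K_t)` closed under almost sure convergence:
an unbounded sequence of summands, normalized along a measurable subsequence, yields a nonzero
reversible direction, which can be used to eliminate a coordinate. Hence `R ∩ L²` is determined by
its dual cone, and an exhaustion argument gives one `Z` in that dual cone whose conditional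
expectations are strictly positive on each generator of `K_t` wherever some other element of the
dual cone is. Where they vanish on a generator, its negative therefore belongs to `R`, hence to
`K_t` by no-arbitrage, so that `P[Z | 𝔉_t]` lies in `ri K_t*`.
-/

open MeasureTheory Set

open Filter Topology ProperCone
open scoped InnerProductSpace

section RandomSubsequence

variable {Ω : Type*} [MeasurableSpace Ω]

theorem exists_measurable_subset_of_finite_cover {ι : Type*} [Finite ι] {N : ℕ → Set Ω}
    (hN : ∀ n, MeasurableSet (N n)) (hfreq : ∀ ω, ∃ᶠ n in atTop, ω ∈ N n)
    {A : ι → ℕ → Set Ω} (hA : ∀ j n, MeasurableSet (A j n)) (hcover : ∀ n ω, ∃ j, ω ∈ A j n) :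
    ∃ N' ≤ N, (∀ n, MeasurableSet (N' n)) ∧ (∀ ω, ∃ᶠ n in atTop, ω ∈ N' n) ∧
      ∀ ω, ∃ j, ∀ n, ω ∈ N' n → ω ∈ A j n := by
  classical
  have hpigeon : ∀ ω, ∃ j, ∃ᶠ n in atTop, ω ∈ N n ∩ A j n := fun ω =>
    frequently_exists.1 ((hfreq ω).mono fun n hn => (hcover n ω).imp fun _ => And.intro hn)
  rcases isEmpty_or_nonempty ι with _ | _
  · exact ⟨N, le_rfl, hN, hfreq, fun ω => isEmptyElim (hpigeon ω).choose⟩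
  obtain ⟨e, he⟩ := exists_surjective_nat ι
  have hex : ∀ ω, ∃ j, ∃ᶠ n in atTop, ω ∈ N n ∩ A (e j) n := fun ω => he.exists.1 (hpigeon ω)
  let J : Ω → ℕ := fun ω => Nat.find (hex ω)
  have hJ : Measurable J := measurable_find hex fun j => by
    simp_rw [← mem_limsup_iff_frequently_mem]
    exact MeasurableSet.measurableSet_limsup fun n => (hN n).inter (hA (e j) n)
  refine ⟨fun n => N n ∩ {ω | ω ∈ A (e (J ω)) n}, fun n => inter_subset_left, fun n => ?_,
    fun ω => Nat.find_spec (hex ω), fun ω => ⟨e (J ω), fun n hn => hn.2⟩⟩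
  have hpre : Measurable fun p : ℕ × Ω => p.2 ∈ A (e p.1) n :=
    measurable_from_prod_countable_right fun j => (hA (e j) n).mem
  exact (hN n).inter (hpre.comp (hJ.prodMk measurable_id)).setOf

theorem exists_antitone_measurable_of_finite_covers {ι : ℕ → Type*} [∀ k, Finite (ι k)]
    {A : ∀ k, ι k → ℕ → Set Ω} (hA : ∀ k j n, MeasurableSet (A k j n))
    (hcover : ∀ k n ω, ∃ j, ω ∈ A k j n) :
    ∃ N : ℕ → ℕ → Set Ω, Antitone N ∧ (∀ k n, MeasurableSet (N k n)) ∧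
      (∀ k ω, ∃ᶠ n in atTop, ω ∈ N k n) ∧ ∀ k ω, ∃ j, ∀ n, ω ∈ N k n → ω ∈ A k j n := by
  let Frequent := {N : ℕ → Set Ω // (∀ n, MeasurableSet (N n)) ∧ ∀ ω, ∃ᶠ n in atTop, ω ∈ N n}
  have hstep : ∀ k (N : Frequent), ∃ N' : Frequent, N'.1 ≤ N.1 ∧
      ∀ ω, ∃ j, ∀ n, ω ∈ N'.1 n → ω ∈ A k j n := fun k N =>
    let ⟨N', hle, hmeas, hfreq, hsub⟩ :=
      exists_measurable_subset_of_finite_cover N.2.1 N.2.2 (hA k) (hcover k)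
    ⟨⟨N', hmeas, hfreq⟩, hle, hsub⟩
  choose next hle hsub using hstep
  let N : ℕ → Frequent := Nat.rec
    ⟨fun _ => univ, fun _ => .univ, fun ω => .of_forall fun _ => mem_univ ω⟩ next
  exact ⟨fun k => (N (k + 1)).1, antitone_nat_of_succ_le fun k => hle (k + 1) _,
    fun k => (N (k + 1)).2.1, fun k => (N (k + 1)).2.2, fun k => hsub k (N k)⟩

theorem measurable_comp_index {X : Type*} [MeasurableSpace X] {v : ℕ → Ω → X}
    (hv : ∀ n, Measurable (v n)) {σ : Ω → ℕ} (hσ : Measurable σ) :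
    Measurable fun ω => v (σ ω) ω :=
  have : Measurable fun p : ℕ × Ω => v p.1 p.2 := measurable_from_prod_countable_right hv
  this.comp (hσ.prodMk measurable_id)

theorem exists_measurable_subseq_tendsto {X : Type*} [PseudoMetricSpace X] [MeasurableSpace X]
    [BorelSpace X] {K : Set X} (hK : IsCompact K) {v : ℕ → Ω → X} (hv : ∀ n, Measurable (v n))
    (hvK : ∀ n ω, v n ω ∈ K) :
    ∃ (σ : ℕ → Ω → ℕ) (y : Ω → X), (∀ k, Measurable (σ k)) ∧ Measurable y ∧
      (∀ ω, Tendsto (fun k => σ k ω) atTop atTop) ∧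
      ∀ ω, Tendsto (fun k => v (σ k ω) ω) atTop (𝓝 (y ω)) := by
  classical
  choose c _ hcfin hcball using fun k : ℕ =>
    hK.finite_cover_balls (show (0 : ℝ) < (1 / 2) ^ k by positivity)
  have (k : ℕ) : Finite (c k) := hcfin k
  obtain ⟨N, hanti, hmeas, hfreq, hball⟩ := exists_antitone_measurable_of_finite_covers
    (A := fun k (x : c k) n => v n ⁻¹' Metric.ball x ((1 / 2) ^ k))
    (fun k x n => hv n Metric.isOpen_ball.measurableSet)
    (fun k n ω => by simpa using hcball k (hvK n ω))
  have hex : ∀ k ω, ∃ n, ω ∈ N k n ∧ k ≤ n := fun k ω =>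
    ((hfreq k ω).and_eventually (eventually_ge_atTop k)).exists
  let σ : ℕ → Ω → ℕ := fun k ω => Nat.find (hex k ω)
  have hσN : ∀ k ω, ω ∈ N k (σ k ω) := fun k ω => (Nat.find_spec (hex k ω)).1
  have hσ : ∀ k, Measurable (σ k) := fun k =>
    measurable_find (hex k) fun n => (hmeas k n).inter (MeasurableSet.const (k ≤ n))
  have hcauchy : ∀ ω, CauchySeq fun k => v (σ k ω) ω := fun ω => by
    refine cauchySeq_of_le_tendsto_0 (fun k => (1 / 2 : ℝ) ^ k + (1 / 2) ^ k)
      (fun n p k hn hp => ?_) ?_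
    · obtain ⟨x, hx⟩ := hball k ω
      exact (dist_triangle_right _ _ (x : X)).trans (add_le_add
        (hx _ (hanti hn _ (hσN n ω))).le (hx _ (hanti hp _ (hσN p ω))).le)
    · simpa using (tendsto_pow_atTop_nhds_zero_of_lt_one
        (by norm_num : (0 : ℝ) ≤ 1 / 2) (by norm_num)).add
        (tendsto_pow_atTop_nhds_zero_of_lt_one (by norm_num : (0 : ℝ) ≤ 1 / 2) (by norm_num))
  choose y _ hy using fun ω => cauchySeq_tendsto_of_isComplete hK.isComplete
    (fun k => hvK (σ k ω) ω) (hcauchy ω)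
  exact ⟨σ, y, hσ, measurable_of_tendsto_metrizable (fun k => measurable_comp_index hv (hσ k))
    (tendsto_pi_nhds.2 hy), fun ω => tendsto_atTop_mono
      (fun k => (Nat.find_spec (hex k ω)).2) tendsto_id, hy⟩

end RandomSubsequence

theorem aestronglyMeasurable_subalgebra_of_tendsto_ae {Ω E : Type*} {F m : MeasurableSpace Ω}
    {P : Measure Ω} [NormedAddCommGroup E] [CompleteSpace E] {f : ℕ → Ω → E} {ξ : Ω → E}
    (hf : ∀ n, AEStronglyMeasurable[F] (f n) P)
    (hξ : ∀ᵐ ω ∂P, Tendsto (fun n => f n ω) atTop (𝓝 (ξ ω))) : AEStronglyMeasurable[F] ξ P := by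
  refine ⟨_, @StronglyMeasurable.limUnder _ _ _ F _ _ atTop _ _ _ _
    fun n => (hf n).stronglyMeasurable_mk, ?_⟩
  filter_upwards [hξ, ae_all_iff.2 fun n => (hf n).ae_eq_mk] with ω hω hmk
  exact ((hω.congr hmk).limUnder_eq).symm

section ConditionalCone

open scoped Pointwise

variable {Ω E ι : Type*} {F m : MeasurableSpace Ω} {P : Measure Ω}
  [NormedAddCommGroup E] [NormedSpace ℝ E] {A R : Set (Ω → E)}

/-- A convex cone of random vectors over the nonnegative `F`-measurable random scalars. -/
structure IsConditionalCone (F : MeasurableSpace Ω) (R : Set (Ω → E)) : Prop where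
  zero_mem : 0 ∈ R
  add_mem : ∀ ⦃f g⦄, f ∈ R → g ∈ R → f + g ∈ R
  smul_mem : ∀ ⦃a : Ω → ℝ⦄ ⦃f⦄, Measurable[F] a → 0 ≤ a → f ∈ R → a • f ∈ R

/-- A conditional cone that is sequentially closed for almost sure convergence; in particular it is
stable under modification on null sets. -/
structure IsClosedConditionalCone {m : MeasurableSpace Ω} (P : Measure Ω)
    (F : MeasurableSpace Ω) (R : Set (Ω → E)) : Prop
    extends IsConditionalCone F R where
  mem_of_tendsto_ae : ∀ ⦃f : ℕ → Ω → E⦄ ⦃ξ : Ω → E⦄, (∀ n, f n ∈ R) →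
    (∀ᵐ ω ∂P, Tendsto (fun n => f n ω) atTop (𝓝 (ξ ω))) → ξ ∈ R

namespace IsConditionalCone

theorem mono {F' : MeasurableSpace Ω} (hR : IsConditionalCone F R) (h : F' ≤ F) :
    IsConditionalCone F' R :=
  ⟨hR.zero_mem, hR.add_mem, fun _ _ ha => hR.smul_mem (ha.mono h le_rfl)⟩

theorem sum_mem (hR : IsConditionalCone F R) {s : Finset ι} {f : ι → Ω → E}
    (hf : ∀ i ∈ s, f i ∈ R) : ∑ i ∈ s, f i ∈ R :=
  Finset.sum_induction f (· ∈ R) hR.add_mem hR.zero_mem hf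

theorem indicator_mem (hR : IsConditionalCone F R) {f : Ω → E} (hf : f ∈ R) {B : Set Ω}
    (hB : MeasurableSet[F] B) : B.indicator f ∈ R := by
  have h := hR.smul_mem (measurable_one.indicator hB) (indicator_nonneg fun _ _ => zero_le_one) hf
  convert! h using 1
  ext ω
  by_cases hω : ω ∈ B <;> simp [hω]

theorem smul_mem_of_neg_mem (hR : IsConditionalCone F R) {f : Ω → E} (hf : f ∈ R) (hf' : -f ∈ R)
    {a : Ω → ℝ} (ha : Measurable[F] a) : a • f ∈ R := by
  have h := hR.add_mem (hR.smul_mem (ha.max measurable_const) (fun _ => le_max_right _ 0) hf)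
    (hR.smul_mem (ha.neg.max measurable_const) (fun _ => le_max_right _ 0) hf')
  convert! h using 1
  ext ω
  simp [← sub_eq_add_neg, ← sub_smul, max_zero_sub_max_neg_zero_eq_self]

theorem smul_add_smul_mem (hR : IsConditionalCone F R) {f z : Ω → E} (hf : f ∈ R) (hz : z ∈ R)
    (hz' : -z ∈ R) {a g : Ω → ℝ} (ha : Measurable[F] a) (ha0 : 0 ≤ a) (hg : Measurable[F] g) :
    a • f + g • z ∈ R :=
  hR.add_mem (hR.smul_mem ha ha0 hf) (hR.smul_mem_of_neg_mem hz hz' hg)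

theorem add (hA : IsConditionalCone F A) (hR : IsConditionalCone F R) :
    IsConditionalCone F (A + R) where
  zero_mem := ⟨0, hA.zero_mem, 0, hR.zero_mem, add_zero 0⟩
  add_mem := by
    rintro _ _ ⟨f, hf, r, hr, rfl⟩ ⟨g, hg, q, hq, rfl⟩
    exact ⟨f + g, hA.add_mem hf hg, r + q, hR.add_mem hr hq, add_add_add_comm ..⟩
  smul_mem := by
    rintro a _ ha ha0 ⟨f, hf, r, hr, rfl⟩
    exact ⟨a • f, hA.smul_mem ha ha0 hf, a • r, hR.smul_mem ha ha0 hr, (smul_add ..).symm⟩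

end IsConditionalCone

namespace IsClosedConditionalCone

theorem mono {F' : MeasurableSpace Ω} (hR : IsClosedConditionalCone P F R) (h : F' ≤ F) :
    IsClosedConditionalCone P F' R :=
  ⟨hR.toIsConditionalCone.mono h, hR.mem_of_tendsto_ae⟩

theorem congr (hR : IsClosedConditionalCone P F R) {f g : Ω → E} (hf : f ∈ R) (hfg : f =ᵐ[P] g) :
    g ∈ R :=
  hR.mem_of_tendsto_ae (fun _ => hf) (hfg.mono fun _ h => h ▸ tendsto_const_nhds)

theorem comp_index_mem (hR : IsClosedConditionalCone P F R) {f : ℕ → Ω → E} (hf : ∀ n, f n ∈ R)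
    {σ : Ω → ℕ} (hσ : Measurable[F] σ) : (fun ω => f (σ ω) ω) ∈ R := by
  refine hR.mem_of_tendsto_ae (f := fun n => ∑ i ∈ Finset.range n, (σ ⁻¹' {i}).indicator (f i))
    (fun n => hR.sum_mem fun i _ => hR.indicator_mem (hf i) (hσ (measurableSet_singleton i)))
    (ae_of_all _ fun ω => tendsto_atTop_of_eventually_const (i₀ := σ ω + 1) fun n hn => ?_)
  rw [Finset.sum_apply, Finset.sum_eq_single_of_mem (σ ω) (Finset.mem_range.2 hn)
    fun i _ hi => indicator_of_notMem (show ω ∉ σ ⁻¹' {i} from Ne.symm hi) (f i)]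
  exact indicator_of_mem (show ω ∈ σ ⁻¹' {σ ω} from rfl) _

end IsClosedConditionalCone

/-- The random vectors that are almost everywhere equal to an `F`-measurable one and take values in
the random set `C` almost surely; for `C = K_t` this is `L⁰(K_t, F)`. -/
def aeSelections {_ : MeasurableSpace Ω} (P : Measure Ω)
    (F : MeasurableSpace Ω) (C : Ω → Set E) : Set (Ω → E) :=
  {ξ | AEStronglyMeasurable[F] ξ P ∧ ∀ᵐ ω ∂P, ξ ω ∈ C ω}

theorem isClosedConditionalCone_aeSelections [CompleteSpace E] (C : Ω → ProperCone ℝ E) :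
    IsClosedConditionalCone P F (aeSelections P F fun ω => (C ω : Set E)) where
  zero_mem := ⟨aestronglyMeasurable_zero, ae_of_all _ fun ω => zero_mem (C ω)⟩
  add_mem _ _ hf hg := ⟨hf.1.add hg.1, hf.2.mp (hg.2.mono fun _ hg hf => add_mem hf hg)⟩
  smul_mem _ _ ha ha0 hf := ⟨ha.stronglyMeasurable.aestronglyMeasurable.smul hf.1,
    hf.2.mono fun ω hf => (C ω).smul_mem hf (ha0 ω)⟩
  mem_of_tendsto_ae f ξ hf hξ := by
    refine ⟨aestronglyMeasurable_subalgebra_of_tendsto_ae (fun n => (hf n).1) hξ, ?_⟩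
    filter_upwards [hξ, ae_all_iff.2 fun n => (hf n).2] with ω hω hC
    exact (C ω).isClosed.mem_of_tendsto hω (.of_forall hC)

theorem isClosedConditionalCone_ae_eq_zero :
    IsClosedConditionalCone P F {ξ : Ω → E | ξ =ᵐ[P] 0} where
  zero_mem := ae_eq_refl (0 : Ω → E)
  add_mem _ _ hf hg := by simpa using hf.out.add hg.out
  smul_mem a _ _ _ hf := hf.out.mono fun ω hω => by simp [hω]
  mem_of_tendsto_ae f ξ hf hξ := by
    filter_upwards [hξ, ae_all_iff.2 hf] with ω hω hzero
    exact tendsto_nhds_unique hω (by simp [hzero])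

end ConditionalCone

section TwoTerms

open scoped Pointwise

variable {Ω E ι : Type*} {F m : MeasurableSpace Ω} {P : Measure Ω}
  [NormedAddCommGroup E] [InnerProductSpace ℝ E] [FiniteDimensional ℝ E]
  {A R : Set (Ω → E)}

/- `y` and `α` are the limits of `c n / (1 + ‖c n‖)` and `1 / (1 + ‖c n‖)` along a measurable
subsequence; `α` vanishes exactly where `c n` is unbounded along it. -/
theorem exists_normalized_limit [MeasurableSpace E] [BorelSpace E]
    (hA : IsClosedConditionalCone P F A) (hR : IsClosedConditionalCone P F R)
    {c r : ℕ → Ω → E} {ξ : Ω → E} (hc : ∀ n, c n ∈ A) (hcm : ∀ n, Measurable[F] (c n))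
    (hr : ∀ n, r n ∈ R) (hξ : ∀ᵐ ω ∂P, Tendsto (fun n => c n ω + r n ω) atTop (𝓝 (ξ ω))) :
    ∃ (y : Ω → E) (α : Ω → ℝ), y ∈ A ∧ Measurable[F] y ∧ Measurable[F] α ∧ 0 ≤ α ∧
      (∀ ω, ‖y ω‖ = 1 - α ω) ∧ α • ξ - y ∈ R ∧
      ∀ ω b, (∀ n, ⟪b, c n ω⟫_ℝ = 0) → ⟪b, y ω⟫_ℝ = 0 := by
  let a : ℕ → Ω → ℝ := fun n ω => (1 + ‖c n ω‖)⁻¹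
  have ham : ∀ n, Measurable[F] (a n) := fun n =>
    ((measurable_norm.comp (hcm n)).const_add 1).inv
  have ha : ∀ n ω, 0 ≤ a n ω := fun n ω => by positivity
  have hnorm : ∀ n ω, ‖a n ω • c n ω‖ = 1 - a n ω := fun n ω => by
    rw [norm_smul, Real.norm_of_nonneg (ha n ω)]
    simp only [a]
    field_simp
    ring
  obtain ⟨σ, v, hσ, hv, hσlim, hlim⟩ := @exists_measurable_subseq_tendsto Ω F (E × ℝ) _ _ _ _
    (isCompact_closedBall 0 1) (fun n ω => (a n ω • c n ω, a n ω))
    (fun n => ((ham n).smul (hcm n)).prodMk (ham n)) fun n ω => by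
      have hle : a n ω ≤ 1 := sub_nonneg.1 (hnorm n ω ▸ norm_nonneg _)
      simp only [mem_closedBall_zero_iff, Prod.norm_def, hnorm, Real.norm_of_nonneg (ha n ω),
        sup_le_iff]
      exact ⟨sub_le_self 1 (ha n ω), hle⟩
  have hy : ∀ ω, Tendsto (fun k => a (σ k ω) ω • c (σ k ω) ω) atTop (𝓝 (v ω).1) :=
    fun ω => (hlim ω).fst_nhds
  have hα : ∀ ω, Tendsto (fun k => a (σ k ω) ω) atTop (𝓝 (v ω).2) :=
    fun ω => (hlim ω).snd_nhds
  refine ⟨fun ω => (v ω).1, fun ω => (v ω).2,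
    hA.mem_of_tendsto_ae (fun k => hA.comp_index_mem
      (fun n => hA.smul_mem (ham n) (ha n) (hc n)) (hσ k)) (ae_of_all _ hy),
    hv.fst, hv.snd, fun ω => ge_of_tendsto' (hα ω) fun k => ha _ _,
    fun ω => tendsto_nhds_unique (hy ω).norm (by simpa only [hnorm] using (hα ω).const_sub 1),
    hR.mem_of_tendsto_ae (fun k => hR.comp_index_mem
      (fun n => hR.smul_mem (ham n) (ha n) (hr n)) (hσ k)) ?_, fun ω b hb => ?_⟩
  · filter_upwards [hξ] with ω hω
    refine (((hα ω).smul (hω.comp (hσlim ω))).sub (hy ω)).congr fun k => ?_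
    simp [smul_add]
  · refine tendsto_nhds_unique (tendsto_const_nhds.inner (hy ω)) ?_
    simp [inner_smul_right, hb]

theorem exists_reversible_of_tendsto [MeasurableSpace E] [BorelSpace E]
    (hA : IsClosedConditionalCone P F A) (hR : IsClosedConditionalCone P F R)
    (hrev : ∀ f ∈ A, -f ∈ R → -f ∈ A ∧ f ∈ R)
    {c r : ℕ → Ω → E} {ξ : Ω → E} (hc : ∀ n, c n ∈ A) (hcm : ∀ n, Measurable[F] (c n))
    (hr : ∀ n, r n ∈ R) (hξ : ∀ᵐ ω ∂P, Tendsto (fun n => c n ω + r n ω) atTop (𝓝 (ξ ω))) :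
    ∃ z ∈ A, Measurable[F] z ∧ -z ∈ A ∧ z ∈ R ∧ -z ∈ R ∧
      (fun ω => 1 - ‖z ω‖ ^ 2) • ξ ∈ A + R ∧
      ∀ ω b, (∀ n, ⟪b, c n ω⟫_ℝ = 0) → ⟪b, z ω⟫_ℝ = 0 := by
  obtain ⟨y, α, hy, hym, hαm, hα, hnorm, hrem, hb⟩ := exists_normalized_limit hA hR hc hcm hr hξ
  have hB : MeasurableSet[F] (α ⁻¹' {0}) := hαm (measurableSet_singleton 0)
  have hz := hA.indicator_mem hy hB
  have hz' : -(α ⁻¹' {0}).indicator y ∈ R := by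
    convert! hR.indicator_mem hrem hB using 1
    ext ω
    by_cases hω : α ω = 0 <;> simp [hω]
  refine ⟨_, hz, hym.indicator hB, (hrev _ hz hz').1, (hrev _ hz hz').2, hz', ?_, fun ω b hω => ?_⟩
  · have hmem := (hA.toIsConditionalCone.add hR.toIsConditionalCone).smul_mem hαm.inv
      (fun ω => inv_nonneg.2 (hα ω)) (add_mem_add hy hrem)
    convert! hmem using 1
    ext ω
    by_cases hω : α ω = 0 <;> simp [hω, hnorm]
  · by_cases hω' : α ω = 0 <;> simp [hω', hb ω b hω]

theorem mem_add_of_tendsto_ae_of_coord_eq_zero [MeasurableSpace E] [BorelSpace E] [Fintype ι]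
    (b : OrthonormalBasis ι ℝ E)
    (hA : IsClosedConditionalCone P F A) (hR : IsClosedConditionalCone P F R)
    (hrev : ∀ f ∈ A, -f ∈ R → -f ∈ A ∧ f ∈ R) (s : Finset ι)
    {c r : ℕ → Ω → E} {ξ : Ω → E} (hc : ∀ n, c n ∈ A) (hcm : ∀ n, Measurable[F] (c n))
    (hcs : ∀ n ω, ∀ i ∉ s, ⟪b i, c n ω⟫_ℝ = 0)
    (hr : ∀ n, r n ∈ R) (hξ : ∀ᵐ ω ∂P, Tendsto (fun n => c n ω + r n ω) atTop (𝓝 (ξ ω))) :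
    ξ ∈ A + R := by
  classical
  induction s using Finset.strongInduction generalizing c r ξ with | H s ih =>
  obtain ⟨z, hz, hzm, hz', hzR, hzR', hcompl, hb⟩ :=
    exists_reversible_of_tendsto hA hR hrev hc hcm hr hξ
  have hsum := hA.toIsConditionalCone.add hR.toIsConditionalCone
  let Z : ι → Ω → ℝ := fun i ω => ⟪b i, z ω⟫_ℝ
  let q : ι → Ω → ℝ := fun i ω => Z i ω ^ 2
  have hZm : ∀ i, Measurable[F] (Z i) := fun i => hzm.const_inner
  have hqm : ∀ i, Measurable[F] (q i) := fun i => (hZm i).pow_const 2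
  have hq : ∀ i, 0 ≤ q i := fun i ω => sq_nonneg (Z i ω)
  have hcoord : ∀ i, q i • ξ ∈ A + R := fun i => by
    by_cases hi : i ∈ s
    · let g : ℕ → Ω → ℝ := fun n ω => Z i ω * ⟪b i, c n ω⟫_ℝ
      have hgm : ∀ n, Measurable[F] (g n) := fun n => (hZm i).mul (hcm n).const_inner
      -- subtracting `(Z i * c n i) • z` from `(Z i ^ 2) • c n` eliminates the coordinate `i`
      refine ih (s.erase i) (Finset.erase_ssubset hi)
        (fun n => hA.smul_add_smul_mem (hc n) hz' (by rwa [neg_neg]) (hqm i) (hq i) (hgm n))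
        (fun n => ((hqm i).smul (hcm n)).add ((hgm n).smul hzm.neg)) (fun n ω j hj => ?_)
        (fun n => hR.smul_add_smul_mem (hr n) hzR hzR' (hqm i) (hq i) (hgm n)) ?_
      · rcases eq_or_ne j i with rfl | hji
        · simp only [q, g, Z, Pi.add_apply, Pi.smul_apply', Pi.neg_apply, inner_add_right,
            inner_smul_right, inner_neg_right]
          ring
        · have hjs : j ∉ s := fun h => hj (Finset.mem_erase.2 ⟨hji, h⟩)
          simp [inner_add_right, inner_smul_right, hcs _ _ j hjs,
            hb ω (b j) fun n => hcs n ω j hjs]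
      · filter_upwards [hξ] with ω hω
        refine (hω.const_smul (q i ω)).congr fun n => ?_
        simp only [Pi.add_apply, Pi.smul_apply', Pi.neg_apply, smul_add, smul_neg]
        abel
    · have hqi : q i = 0 := funext fun ω => by simp [q, Z, hb ω (b i) fun n => hcs n ω i hi]
      simpa [hqi] using hsum.zero_mem
  -- the weights `1 - ‖z‖ ^ 2` and `q i` add up to one
  convert! hsum.add_mem hcompl (hsum.sum_mem fun i (_ : i ∈ Finset.univ) => hcoord i) using 1
  ext ω
  have hnorm : ∑ i, q i ω = ‖z ω‖ ^ 2 := b.sum_sq_inner_right (z ω)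
  simp [← Finset.sum_smul, ← add_smul, hnorm]

theorem IsClosedConditionalCone.add
    (hA : IsClosedConditionalCone P F A) (hR : IsClosedConditionalCone P F R)
    (hmeas : ∀ f ∈ A, AEStronglyMeasurable[F] f P)
    (hrev : ∀ f ∈ A, -f ∈ R → -f ∈ A ∧ f ∈ R) : IsClosedConditionalCone P F (A + R) where
  toIsConditionalCone := hA.toIsConditionalCone.add hR.toIsConditionalCone
  mem_of_tendsto_ae f ξ hf hξ := by
    borelize E
    choose c hc r hr hcr using hf
    have hmk : ∀ n, c n =ᵐ[P] (hmeas _ (hc n)).mk := fun n => (hmeas _ (hc n)).ae_eq_mk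
    refine mem_add_of_tendsto_ae_of_coord_eq_zero (stdOrthonormalBasis ℝ E) hA hR hrev Finset.univ
      (fun n => hA.congr (hc n) (hmk n))
      (fun n => (hmeas _ (hc n)).stronglyMeasurable_mk.measurable) (by simp) hr ?_
    filter_upwards [hξ, ae_all_iff.2 hmk] with ω hω hω'
    exact hω.congr fun n => by rw [← hω' n, ← hcr n]; rfl

end TwoTerms

section Update

variable {τ : Type*} [DecidableEq τ] {s : Finset τ} {a : τ}

theorem update_mem_of_mem_insert {β : τ → Type*} {A : ∀ t, Set (β t)} {x : ∀ t, β t}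
    (hx : ∀ t ∈ s, x t ∈ A t) {f : β a} (hf : f ∈ A a) :
    ∀ t ∈ insert a s, Function.update x a f t ∈ A t := by
  intro t ht
  rcases eq_or_ne t a with rfl | hta
  · simpa using hf
  · simpa [hta] using hx t (Finset.mem_of_mem_insert_of_ne ht hta)

theorem sum_insert_update {M : Type*} [AddCommMonoid M] (ha : a ∉ s) (x : τ → M) (f : M) :
    ∑ t ∈ insert a s, Function.update x a f t = f + ∑ t ∈ s, x t := by
  rw [Finset.sum_insert ha, Finset.sum_update_of_notMem ha, Function.update_self]

end Update

section Sums

open scoped Pointwise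

variable {Ω E τ : Type*} {m : MeasurableSpace Ω} {P : Measure Ω} [NormedAddCommGroup E]
  {A : τ → Set (Ω → E)} {s : Finset τ}

/-- The random vectors that are almost everywhere equal to a sum `∑ t ∈ s, x t` with
`x t ∈ A t`. -/
def aeSum (P : Measure Ω) (A : τ → Set (Ω → E)) (s : Finset τ) : Set (Ω → E) :=
  {ξ | ∃ x : τ → Ω → E, (∀ t ∈ s, x t ∈ A t) ∧ ξ =ᵐ[P] ∑ t ∈ s, x t}

/-- The strict no-arbitrage condition for the cones `A t` with `t ∈ s`: contributions that cancel
are individually reversible. -/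
def CancelsReversibly (P : Measure Ω) (A : τ → Set (Ω → E)) (s : Finset τ) : Prop :=
  ∀ x : τ → Ω → E, (∀ t ∈ s, x t ∈ A t) → ∑ t ∈ s, x t =ᵐ[P] 0 → ∀ t ∈ s, -x t ∈ A t

theorem CancelsReversibly.mono (h : CancelsReversibly P A s) (h0 : ∀ t, 0 ∈ A t) {s' : Finset τ}
    (hs : s' ⊆ s) : CancelsReversibly P A s' := by
  classical
  intro x hx hsum t ht
  have hneg := h (fun t => if t ∈ s' then x t else 0)
    (fun t _ => by by_cases ht : t ∈ s' <;> simp [ht, hx, h0])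
    (by rwa [Finset.sum_ite_mem, Finset.inter_eq_right.2 hs]) t (hs ht)
  simpa [ht] using hneg

theorem mem_aeSum_of_mem (h0 : ∀ t, 0 ∈ A t) {a : τ} (ha : a ∈ s) {f : Ω → E} (hf : f ∈ A a) :
    f ∈ aeSum P A s := by
  classical
  refine ⟨Pi.single a f, fun t _ => ?_, by simp [Finset.sum_pi_single', ha]⟩
  rcases eq_or_ne t a with rfl | hta
  · simpa using hf
  · simpa [hta] using h0 t

theorem CancelsReversibly.neg_mem_of_mem_aeSum (h : CancelsReversibly P A s)
    {a : τ}
    (hadd : ∀ ⦃f g⦄, f ∈ A a → g ∈ A a → f + g ∈ A a) (ha : a ∈ s) {f : Ω → E} (hf : f ∈ A a)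
    (hf' : -f ∈ aeSum P A s) : -f ∈ A a := by
  classical
  obtain ⟨x, hx, hfx⟩ := hf'
  have hneg := h (Function.update x a (f + x a))
    (Finset.insert_eq_self.2 ha ▸ update_mem_of_mem_insert hx (hadd hf (hx a ha)))
    (by
      rw [Finset.sum_update_of_mem ha, add_assoc, Finset.sdiff_singleton_eq_erase,
        Finset.add_sum_erase _ _ ha]
      filter_upwards [hfx] with ω hω
      simp [← hω]) a ha
  simpa using hadd hneg (hx a ha)

variable [DecidableEq τ] {a : τ}

theorem aeSum_insert (ha : a ∉ s) : aeSum P A (insert a s) = A a + aeSum P A s := by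
  ext ξ
  constructor
  · rintro ⟨x, hx, hξ⟩
    refine ⟨x a, hx a (by simp), ξ - x a, ⟨x, fun t ht => hx t (by simp [ht]), ?_⟩, by simp⟩
    rw [Finset.sum_insert ha] at hξ
    filter_upwards [hξ] with ω hω
    simp [hω]
  · rintro ⟨f, hf, r, ⟨x, hx, hr⟩, rfl⟩
    exact ⟨_, update_mem_of_mem_insert hx hf, sum_insert_update ha x f ▸ EventuallyEq.rfl.add hr⟩

theorem CancelsReversibly.neg_mem_of_insert (ha : a ∉ s)
    (h : CancelsReversibly P A (insert a s)) {f : Ω → E} (hf : f ∈ A a) (hf' : -f ∈ aeSum P A s) :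
    -f ∈ A a ∧ f ∈ aeSum P A s := by
  obtain ⟨x, hx, hfx⟩ := hf'
  have hneg := h _ (update_mem_of_mem_insert hx hf) <| by
    rw [sum_insert_update ha]
    filter_upwards [hfx] with ω hω
    simp [← hω]
  refine ⟨by simpa using hneg a (by simp), -x, fun t ht => ?_, by simpa using hfx.neg⟩
  simpa [ne_of_mem_of_not_mem ht ha] using hneg t (by simp [ht])

end Sums

theorem isClosedConditionalCone_aeSum {Ω E τ : Type*} {m : MeasurableSpace Ω} {P : Measure Ω}
    [NormedAddCommGroup E] [InnerProductSpace ℝ E] [FiniteDimensional ℝ E]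
    [LinearOrder τ] {ℱ : Filtration τ m} {A : τ → Set (Ω → E)}
    (hA : ∀ t, IsClosedConditionalCone P (ℱ t) (A t))
    (hmeas : ∀ t, ∀ f ∈ A t, AEStronglyMeasurable[ℱ t] f P) (s : Finset τ)
    (hs : CancelsReversibly P A s) {F : MeasurableSpace Ω} (hF : ∀ t ∈ s, F ≤ ℱ t) :
    IsClosedConditionalCone P F (aeSum P A s) := by
  induction s using Finset.induction_on_min generalizing F with
  | empty =>
    simpa [aeSum] using isClosedConditionalCone_ae_eq_zero (E := E) (P := P) (F := F)
  | insert a s ha ih =>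
    have has : a ∉ s := fun h => (ha a h).false
    have hclosed : IsClosedConditionalCone P (ℱ a) (aeSum P A s) :=
      ih (hs.mono (fun t => (hA t).zero_mem) (Finset.subset_insert a s))
        fun t ht => ℱ.mono (ha t ht).le
    rw [aeSum_insert has]
    exact ((hA a).add hclosed (hmeas a) fun f hf hf' => hs.neg_mem_of_insert has hf hf').mono
      (hF a (Finset.mem_insert_self a s))

section Exhaustion

variable {Ω H κ : Type*} {m : MeasurableSpace Ω} {P : Measure Ω} [NormedAddCommGroup H]
  [NormedSpace ℝ H]

theorem summable_geometric_smul [CompleteSpace H] (z : ℕ → H) :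
    Summable fun n => ((1 / 2) ^ n / (1 + ‖z n‖)) • z n := by
  refine .of_norm_bounded summable_geometric_two fun n => ?_
  rw [norm_smul, Real.norm_of_nonneg (by positivity), div_mul_eq_mul_div]
  exact div_le_of_le_mul₀ (by positivity) (by positivity)
    (mul_le_mul_of_nonneg_left (by linarith) (by positivity))

theorem exists_ae_maximal [CompleteSpace H] [IsFiniteMeasure P] (D : ProperCone ℝ H)
    (Φ : H → Set Ω) (hmeas : ∀ Z ∈ D, MeasurableSet (Φ Z))
    (hmono : ∀ Z ∈ D, ∀ W ∈ D, ∀ a : ℝ, 0 < a → Φ Z ≤ᵐ[P] Φ (a • Z + W)) :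
    ∃ Z ∈ D, ∀ W ∈ D, Φ W ≤ᵐ[P] Φ Z := by
  obtain ⟨u, -, hu, huD⟩ := exists_seq_tendsto_sSup (S := (fun Z => P (Φ Z)) '' D)
    ⟨_, 0, zero_mem D, rfl⟩ (OrderTop.bddAbove _)
  choose z hz hzu using huD
  let a : ℕ → ℝ := fun n => (1 / 2) ^ n / (1 + ‖z n‖)
  have ha : ∀ n, 0 < a n := fun n => by positivity
  have haz : ∀ n, a n • z n ∈ D := fun n => D.smul_mem (hz n) (ha n).le
  let Y := ∑' n, a n • z n
  have hY : Y ∈ D := tsum_mem D.isClosed haz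
  have hsub : ∀ n, Φ (z n) ≤ᵐ[P] Φ Y := fun n => by
    have hsplit : Y = a n • z n + _ := (summable_geometric_smul z).tsum_eq_add_tsum_ite n
    rw [hsplit]
    refine hmono _ (hz n) _ (tsum_mem D.isClosed fun k => ?_) _ (ha n)
    split_ifs
    exacts [zero_mem D, haz k]
  have hmax : ∀ W ∈ D, P (Φ W) ≤ P (Φ Y) := fun W hW =>
    (le_sSup (mem_image_of_mem (fun Z => P (Φ Z)) hW)).trans
      (le_of_tendsto' hu fun n => hzu n ▸ measure_mono_ae (hsub n))
  refine ⟨Y, hY, fun W hW => ?_⟩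
  have hYW : Φ Y ≤ᵐ[P] Φ (Y + W) := by simpa using hmono Y hY W hW 1 one_pos
  have hWY : Φ W ≤ᵐ[P] Φ (Y + W) := by simpa [add_comm] using hmono W hW Y hY 1 one_pos
  exact hWY.trans (ae_eq_of_ae_subset_of_measure_ge hYW (hmax _ (add_mem hY hW))
    (hmeas Y hY).nullMeasurableSet (measure_ne_top _ _)).symm.le

theorem exists_forall_ae_maximal [CompleteSpace H] [IsFiniteMeasure P] [Finite κ]
    (D : ProperCone ℝ H) (Φ : κ → H → Set Ω) (hmeas : ∀ k, ∀ Z ∈ D, MeasurableSet (Φ k Z))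
    (hmono : ∀ k, ∀ Z ∈ D, ∀ W ∈ D, ∀ a : ℝ, 0 < a → Φ k Z ≤ᵐ[P] Φ k (a • Z + W)) :
    ∃ Z ∈ D, ∀ k, ∀ W ∈ D, Φ k W ≤ᵐ[P] Φ k Z := by
  classical
  have := Fintype.ofFinite κ
  choose Z hZ hmax using fun k => exists_ae_maximal D (Φ k) (hmeas k) (hmono k)
  refine ⟨∑ k, Z k, sum_mem fun k _ => hZ k, fun k W hW => (hmax k W hW).trans ?_⟩
  simpa [Finset.add_sum_erase] using
    hmono k _ (hZ k) (∑ j ∈ Finset.univ.erase k, Z j) (sum_mem fun j _ => hZ j) 1 one_pos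

end Exhaustion

section SquareIntegrable

variable {Ω E κ : Type*} {F m : MeasurableSpace Ω} {P : Measure Ω} [NormedAddCommGroup E]
  [InnerProductSpace ℝ E] {R : Set (Ω → E)}

theorem integrable_inner_of_memLp {f : Ω → E} (hf : MemLp f 2 P) (Z : Lp E 2 P) :
    Integrable (fun ω => ⟪f ω, Z ω⟫_ℝ) P :=
  (L2.integrable_inner (𝕜 := ℝ) hf.toLp Z).congr
    (hf.coeFn_toLp.mono fun ω hω => by simp only [hω])

theorem setIntegral_inner_condExp [CompleteSpace E] (hF : F ≤ m) [SigmaFinite (P.trim hF)]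
    {h Z : Ω → E} (hh : StronglyMeasurable[F] h) (hZ : Integrable Z P)
    (hhZ : Integrable (fun ω => ⟪h ω, Z ω⟫_ℝ) P) {B : Set Ω} (hB : MeasurableSet[F] B) :
    ∫ ω in B, ⟪h ω, P[Z | F] ω⟫_ℝ ∂P = ∫ ω, ⟪B.indicator h ω, Z ω⟫_ℝ ∂P := by
  have hpull := condExp_bilin_of_stronglyMeasurable_left (innerSL ℝ) hh hhZ hZ
  calc ∫ ω in B, ⟪h ω, P[Z | F] ω⟫_ℝ ∂P
      = ∫ ω in B, (P[fun ω => ⟪h ω, Z ω⟫_ℝ | F]) ω ∂P :=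
        integral_congr_ae (ae_restrict_of_ae hpull.symm)
    _ = ∫ ω in B, ⟪h ω, Z ω⟫_ℝ ∂P := setIntegral_condExp hF hhZ hB
    _ = ∫ ω, ⟪B.indicator h ω, Z ω⟫_ℝ ∂P := by
        rw [← integral_indicator (hF B hB)]
        congr 1 with ω
        by_cases hω : ω ∈ B <;> simp [hω]

/-- The closed convex cone in `L²` of the square integrable members of a closed conditional cone.
Membership of an `L²` class does not depend on the chosen representative. -/
def IsClosedConditionalCone.toL2 (hR : IsClosedConditionalCone P F R) :
    ProperCone ℝ (Lp E 2 P) where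
  carrier := {X | ⇑X ∈ R}
  zero_mem' := hR.congr hR.zero_mem (Lp.coeFn_zero E 2 P).symm
  add_mem' hX hY := hR.congr (hR.add_mem hX hY) (Lp.coeFn_add _ _).symm
  smul_mem' c _ hX := hR.congr (hR.smul_mem measurable_const (fun _ => c.2) hX)
    (Lp.coeFn_smul (c : ℝ) _).symm
  isClosed' := isSeqClosed_iff_isClosed.1 fun _ _ hX hXY =>
    let ⟨_, _, hlim⟩ := (tendstoInMeasure_of_tendsto_Lp hXY).exists_seq_tendsto_ae
    hR.mem_of_tendsto_ae (fun _ => hX _) hlim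

theorem IsClosedConditionalCone.mem_iff_integral_inner_nonneg [CompleteSpace E]
    (hR : IsClosedConditionalCone P F R) {f : Ω → E} (hf : MemLp f 2 P) :
    f ∈ R ↔ ∀ Z ∈ innerDual (hR.toL2 : Set (Lp E 2 P)), 0 ≤ ∫ ω, ⟪f ω, Z ω⟫_ℝ ∂P := by
  have hint (Z : Lp E 2 P) : ⟪hf.toLp, Z⟫_ℝ = ∫ ω, ⟪f ω, Z ω⟫_ℝ ∂P :=
    integral_congr_ae (hf.coeFn_toLp.mono fun ω hω => by simp only [hω])
  have hmem : hf.toLp ∈ hR.toL2 ↔ f ∈ R :=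
    ⟨fun h => hR.congr h hf.coeFn_toLp, fun h => hR.congr h hf.coeFn_toLp.symm⟩
  conv_lhs => rw [← hmem, ← innerDual_innerDual hR.toL2]
  simp only [mem_innerDual (y := hf.toLp), SetLike.mem_coe, ← hint, real_inner_comm hf.toLp]

theorem IsClosedConditionalCone.inner_condExp_nonneg [CompleteSpace E] [IsFiniteMeasure P]
    (hR : IsClosedConditionalCone P F R) {G : MeasurableSpace Ω} (hG : G ≤ m) {h : Ω → E}
    (hh : StronglyMeasurable[G] h) (hh2 : MemLp h 2 P)
    (hhR : ∀ B, MeasurableSet[G] B → B.indicator h ∈ R) {Z : Lp E 2 P}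
    (hZ : Z ∈ innerDual (hR.toL2 : Set (Lp E 2 P))) : ∀ᵐ ω ∂P, 0 ≤ ⟪h ω, P[Z | G] ω⟫_ℝ := by
  have hsm : StronglyMeasurable[G] fun ω => ⟪h ω, P[Z | G] ω⟫_ℝ :=
    hh.inner stronglyMeasurable_condExp
  have hZint : Integrable Z P := (Lp.memLp Z).integrable one_le_two
  have hint : Integrable (fun ω => ⟪h ω, P[Z | G] ω⟫_ℝ) P := integrable_condExp.congr
    (condExp_bilin_of_stronglyMeasurable_left (innerSL ℝ) hh
      (integrable_inner_of_memLp hh2 Z) hZint)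
  refine ae_of_ae_trim hG (ae_nonneg_of_forall_setIntegral_nonneg (hint.trim hG hsm)
    fun B hB _ => ?_)
  rw [← setIntegral_trim hG hsm hB,
    setIntegral_inner_condExp hG hh hZint (integrable_inner_of_memLp hh2 Z) hB]
  exact (hR.mem_iff_integral_inner_nonneg (hh2.indicator (hG B hB))).1 (hhR B hB) Z hZ

theorem IsClosedConditionalCone.exists_condExp_separating [CompleteSpace E] [IsFiniteMeasure P]
    [Finite κ] (hR : IsClosedConditionalCone P F R) {G : κ → MeasurableSpace Ω} (hG : ∀ k, G k ≤ m)
    {h : κ → Ω → E} (hh : ∀ k, StronglyMeasurable[G k] (h k)) (hh2 : ∀ k, MemLp (h k) 2 P)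
    (hhR : ∀ k B, MeasurableSet[G k] B → B.indicator (h k) ∈ R) :
    ∃ Z : Lp E 2 P, ∀ k, (∀ᵐ ω ∂P, 0 ≤ ⟪h k ω, P[Z | G k] ω⟫_ℝ) ∧
      ∃ B, MeasurableSet[G k] B ∧ -B.indicator (h k) ∈ R ∧
        ∀ ω ∉ B, 0 < ⟪h k ω, P[Z | G k] ω⟫_ℝ := by
  have hZint (Z : Lp E 2 P) : Integrable Z P := (Lp.memLp Z).integrable one_le_two
  let Φ : κ → Lp E 2 P → Set Ω := fun k Z => {ω | 0 < ⟪h k ω, P[Z | G k] ω⟫_ℝ}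
  have hΦ : ∀ k Z, MeasurableSet[G k] (Φ k Z) := fun k Z =>
    stronglyMeasurable_const.measurableSet_lt ((hh k).inner stronglyMeasurable_condExp)
  have hnonneg : ∀ Z ∈ innerDual (hR.toL2 : Set (Lp E 2 P)), ∀ k, ∀ᵐ ω ∂P,
      0 ≤ ⟪h k ω, P[Z | G k] ω⟫_ℝ := fun Z hZ k =>
    hR.inner_condExp_nonneg (hG k) (hh k) (hh2 k) (hhR k) hZ
  obtain ⟨Z, hZ, hmax⟩ := exists_forall_ae_maximal (P := P)
    (innerDual (hR.toL2 : Set (Lp E 2 P))) Φ (fun k Z _ => hG k _ (hΦ k Z)) <| by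
      intro k Z _ W hW a ha
      filter_upwards [hnonneg W hW k, condExp_congr_ae (m := G k) (Lp.coeFn_add (a • Z) W),
        condExp_add (m := G k) (hZint (a • Z)) (hZint W),
        condExp_congr_ae (m := G k) (Lp.coeFn_smul a Z), condExp_smul a Z (G k)]
        with ω hWω hadd hadd' hsmul hsmul' hZω
      have hZω' : 0 < ⟪h k ω, P[Z | G k] ω⟫_ℝ := hZω
      change 0 < ⟪h k ω, P[(a • Z + W : Lp E 2 P) | G k] ω⟫_ℝ
      simp only [hadd, hadd', Pi.add_apply, hsmul, hsmul', Pi.smul_apply, inner_add_right,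
        inner_smul_right]
      positivity
  refine ⟨Z, fun k => ⟨hnonneg Z hZ k, (Φ k Z)ᶜ, (hΦ k Z).compl, ?_, fun ω => not_not.1⟩⟩
  have hmeas := (hΦ k Z).compl
  refine (hR.mem_iff_integral_inner_nonneg ((hh2 k).indicator (hG k _ hmeas)).neg).2 fun W hW => ?_
  simp only [Pi.neg_apply, inner_neg_left, integral_neg, neg_nonneg]
  rw [← setIntegral_inner_condExp (hG k) (hh k) (hZint W)
    (integrable_inner_of_memLp (hh2 k) W) hmeas]
  refine setIntegral_nonpos_ae (hG k _ hmeas) ?_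
  filter_upwards [hmax k W hW] with ω hω hωZ
  exact not_lt.1 fun hpos => hωZ (hω hpos)

end SquareIntegrable

section UnitScaling

variable {Ω E : Type*} {F m : MeasurableSpace Ω} {P : Measure Ω} [NormedAddCommGroup E]
  [InnerProductSpace ℝ E] {v w : E}

/-- The positive multiple `v / (1 + ‖v‖)` of `v`, of norm at most one. It makes random vectors
bounded without changing the signs of their inner products. -/
noncomputable def unitScaling (v : E) : E := (1 + ‖v‖)⁻¹ • v

theorem norm_unitScaling_le_one (v : E) : ‖unitScaling v‖ ≤ 1 := by
  rw [unitScaling, norm_smul, norm_inv, Real.norm_of_nonneg (by positivity),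
    inv_mul_le_one₀ (by positivity)]
  linarith

theorem continuous_unitScaling : Continuous (unitScaling : E → E) :=
  ((continuous_norm.const_add 1).inv₀ fun _ => by positivity).smul continuous_id

theorem unitScaling_neg (v : E) : unitScaling (-v) = -unitScaling v := by
  simp [unitScaling]

theorem unitScaling_mem_iff {C : ProperCone ℝ E} : unitScaling v ∈ C ↔ v ∈ C := by
  refine ⟨fun h => ?_, fun h => C.smul_mem h (by positivity)⟩
  have hv : (1 + ‖v‖) • unitScaling v = v := smul_inv_smul₀ (by positivity) v
  exact hv ▸ C.smul_mem h (by positivity)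

theorem inner_unitScaling (v w : E) : ⟪unitScaling v, w⟫_ℝ = (1 + ‖v‖)⁻¹ * ⟪v, w⟫_ℝ :=
  real_inner_smul_left v w _

theorem inner_unitScaling_nonneg_iff : 0 ≤ ⟪unitScaling v, w⟫_ℝ ↔ 0 ≤ ⟪v, w⟫_ℝ := by
  rw [inner_unitScaling, mul_nonneg_iff_of_pos_left (by positivity)]

theorem inner_unitScaling_pos_iff : 0 < ⟪unitScaling v, w⟫_ℝ ↔ 0 < ⟪v, w⟫_ℝ := by
  rw [inner_unitScaling, mul_pos_iff_of_pos_left (by positivity)]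

theorem inner_condExp_nonneg [CompleteSpace E] [IsFiniteMeasure P] (hF : F ≤ m) {X Z : Ω → E}
    (hX : AEStronglyMeasurable[F] X P) (hZ : Integrable Z P)
    (hXZ : ∀ᵐ ω ∂P, 0 ≤ ⟪X ω, Z ω⟫_ℝ) : ∀ᵐ ω ∂P, 0 ≤ ⟪X ω, P[Z | F] ω⟫_ℝ := by
  have hbound : ∀ᵐ ω ∂P, ‖unitScaling (X ω)‖ ≤ 1 := ae_of_all _ fun _ => norm_unitScaling_le_one _
  filter_upwards [condExp_aestronglyMeasurable_bilin_of_bound (innerSL ℝ) hF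
    (continuous_unitScaling.comp_aestronglyMeasurable hX) hZ 1 hbound, condExp_nonneg (m := F)
    (hXZ.mono fun _ => inner_unitScaling_nonneg_iff.2)] with ω hpull hω
  exact inner_unitScaling_nonneg_iff.1 (hω.trans_eq hpull)

theorem inner_eq_zero_of_inner_condExp_nonpos [CompleteSpace E] [IsFiniteMeasure P] (hF : F ≤ m)
    {X Z : Ω → E} (hX : AEStronglyMeasurable[F] X P) (hZ : Integrable Z P)
    (hXZ : ∀ᵐ ω ∂P, 0 ≤ ⟪X ω, Z ω⟫_ℝ) (hnonpos : ∀ᵐ ω ∂P, ⟪X ω, P[Z | F] ω⟫_ℝ ≤ 0) :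
    ∀ᵐ ω ∂P, ⟪X ω, Z ω⟫_ℝ = 0 := by
  have hXm := continuous_unitScaling.comp_aestronglyMeasurable hX
  have hbound : ∀ᵐ ω ∂P, ‖unitScaling (X ω)‖ ≤ 1 := ae_of_all _ fun _ => norm_unitScaling_le_one _
  have hint : Integrable (fun ω => ⟪unitScaling (X ω), Z ω⟫_ℝ) P :=
    (innerSL ℝ).integrable_of_bilin_of_bdd_left 1 (hXm.mono hF) hbound hZ
  have hnonneg : 0 ≤ᵐ[P] fun ω => ⟪unitScaling (X ω), Z ω⟫_ℝ :=
    hXZ.mono fun _ => inner_unitScaling_nonneg_iff.2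
  have hzero : ∫ ω, ⟪unitScaling (X ω), Z ω⟫_ℝ ∂P = 0 := by
    refine le_antisymm ?_ (integral_nonneg_of_ae hnonneg)
    rw [← integral_condExp hF]
    refine integral_nonpos_of_ae ?_
    filter_upwards [condExp_aestronglyMeasurable_bilin_of_bound (innerSL ℝ) hF hXm hZ 1 hbound,
      hnonpos] with ω hpull hω
    exact hpull.trans_le (not_lt.1 fun h => hω.not_gt (inner_unitScaling_pos_iff.1 h))
  filter_upwards [hXZ, (integral_eq_zero_iff_of_nonneg_ae hnonneg hint).1 hzero] with ω hω hω0
  exact hω.antisymm' (not_lt.1 fun h => (inner_unitScaling_pos_iff.2 h).ne' hω0)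

theorem inner_sum_eq_zero_of_martingale {τ : Type*} [LinearOrder τ] [CompleteSpace E]
    [IsFiniteMeasure P] {ℱ : Filtration τ m} {Z : τ → Ω → E} (hZ : Martingale Z ℱ P)
    {x : τ → Ω → E} {s : Finset τ} (hx : ∀ t ∈ s, AEStronglyMeasurable[ℱ t] (x t) P)
    (hxZ : ∀ t ∈ s, ∀ᵐ ω ∂P, 0 ≤ ⟪x t ω, Z t ω⟫_ℝ) {u : τ} (hu : ∀ t ∈ s, t ≤ u)
    (hsum : ∀ᵐ ω ∂P, ⟪∑ t ∈ s, x t ω, Z u ω⟫_ℝ ≤ 0) :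
    (∀ᵐ ω ∂P, ⟪∑ t ∈ s, x t ω, Z u ω⟫_ℝ = 0) ∧
      ∀ t ∈ s, ∀ᵐ ω ∂P, ⟪x t ω, Z t ω⟫_ℝ = 0 := by
  induction s using Finset.induction_on_max generalizing u with
  | empty => simp
  | insert a s ha ih =>
    have hle : ∀ t ∈ insert a s, t ≤ a := fun t ht =>
      (Finset.mem_insert.1 ht).elim le_of_eq fun hts => (ha t hts).le
    have hsm : AEStronglyMeasurable[ℱ a] (∑ t ∈ insert a s, x t) P :=
      Finset.sum_induction x (AEStronglyMeasurable[ℱ a] · P) (fun _ _ => .add)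
        aestronglyMeasurable_zero fun t ht => (hx t ht).mono (ℱ.mono (hle t ht))
    have hX : AEStronglyMeasurable[ℱ a] (fun ω => -∑ t ∈ insert a s, x t ω) P := by
      simpa only [Finset.sum_fn] using hsm.fun_neg
    have hcond : P[Z u | ℱ a] =ᵐ[P] Z a := hZ.condExp_ae_eq (hu a (by simp))
    have hXZ : ∀ᵐ ω ∂P, 0 ≤ ⟪-∑ t ∈ insert a s, x t ω, Z u ω⟫_ℝ := by simpa using hsum
    have hXZa : ∀ᵐ ω ∂P, ⟪x a ω, Z a ω⟫_ℝ + ⟪∑ t ∈ s, x t ω, Z a ω⟫_ℝ ≤ 0 := by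
      filter_upwards [inner_condExp_nonneg (ℱ.le a) hX (hZ.integrable u) hXZ, hcond] with ω hω hωa
      rw [hωa, Finset.sum_insert fun h => (ha a h).false, inner_neg_left, inner_add_left] at hω
      exact neg_nonneg.1 hω
    have hxa := hxZ a (by simp)
    obtain ⟨hs, hxs⟩ := ih (fun t ht => hx t (by simp [ht])) (fun t ht => hxZ t (by simp [ht]))
      (fun t ht => (ha t ht).le) (by filter_upwards [hXZa, hxa] with ω h h' using by linarith)
    have hxa0 : ∀ᵐ ω ∂P, ⟪x a ω, Z a ω⟫_ℝ = 0 := by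
      filter_upwards [hXZa, hxa, hs] with ω h h' hs using by linarith
    refine ⟨?_, by simpa [hxa0] using hxs⟩
    have hzero := inner_eq_zero_of_inner_condExp_nonpos (ℱ.le a) hX (hZ.integrable u) hXZ <| by
      filter_upwards [hcond, hxa0, hs] with ω hωa h h'
      rw [hωa, Finset.sum_insert fun h => (ha a h).false, inner_neg_left, inner_add_left, h, h']
      simp
    simpa using hzero

end UnitScaling

section RelativeInterior

variable {E : Type*} [NormedAddCommGroup E]

theorem exists_lineMap_neg_mem_of_mem_intrinsicInterior [NormedSpace ℝ E] {s : Set E} {z w : E}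
    (hz : z ∈ intrinsicInterior ℝ s) (hw : w ∈ s) :
    ∃ ε > 0, AffineMap.lineMap z w (-ε : ℝ) ∈ s := by
  obtain ⟨y, hy, rfl⟩ := mem_intrinsicInterior.1 hz
  let φ : ℝ → affineSpan ℝ s := fun r =>
    ⟨AffineMap.lineMap (y : E) w (-r), AffineMap.lineMap_mem _ y.2 (subset_affineSpan ℝ s hw)⟩
  have hφ : Continuous φ := (AffineMap.lineMap_continuous.comp continuous_neg).subtype_mk _
  have hφ0 : φ 0 = y := Subtype.ext (by simp [φ])
  have hmem : ∀ᶠ r in 𝓝 (0 : ℝ), φ r ∈ interior ((↑) ⁻¹' s) :=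
    hφ.continuousAt.eventually_mem (isOpen_interior.mem_nhds (hφ0 ▸ hy))
  obtain ⟨ε, hεs, hε⟩ := ((hmem.filter_mono nhdsWithin_le_nhds).and
    (self_mem_nhdsWithin : Ioi (0 : ℝ) ∈ 𝓝[>] 0)).exists
  have hε' : φ ε ∈ Subtype.val ⁻¹' s := interior_subset hεs
  exact ⟨ε, hε, hε'⟩

variable [InnerProductSpace ℝ E] [CompleteSpace E]

theorem neg_mem_of_mem_intrinsicInterior_innerDual {C : ProperCone ℝ E} {x z : E}
    (hz : z ∈ intrinsicInterior ℝ (innerDual (C : Set E) : Set E)) (hx : x ∈ C)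
    (hxz : ⟪x, z⟫_ℝ = 0) : -x ∈ C := by
  rw [← innerDual_innerDual C, mem_innerDual]
  intro w hw
  obtain ⟨ε, hε, hmem⟩ := exists_lineMap_neg_mem_of_mem_intrinsicInterior hz hw
  have hnonneg : 0 ≤ ⟪x, AffineMap.lineMap z w (-ε)⟫_ℝ := hmem hx
  rw [AffineMap.lineMap_apply_module, inner_add_right, real_inner_smul_right,
    real_inner_smul_right, hxz, mul_zero, zero_add] at hnonneg
  rw [inner_neg_right, real_inner_comm]
  exact neg_nonneg.2 (nonpos_of_mul_nonneg_right hnonneg (neg_lt_zero.2 hε))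

/-- The closed convex cone generated by `S`, encoded as the bidual of `S`. -/
noncomputable def closedConeHull (S : Set E) : ProperCone ℝ E :=
  innerDual (innerDual S : Set E)

theorem subset_closedConeHull (S : Set E) : S ⊆ closedConeHull S :=
  fun x hx w hw => (hw hx).trans_eq (real_inner_comm w x)

theorem closedConeHull_le {S : Set E} {C : ProperCone ℝ E} (h : S ⊆ C) : closedConeHull S ≤ C := by
  conv_rhs => rw [← innerDual_innerDual C]
  exact innerDual_le_innerDual (innerDual_le_innerDual h)

theorem innerDual_closedConeHull (S : Set E) :
    innerDual (closedConeHull S : Set E) = innerDual S :=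
  innerDual_innerDual _

theorem mem_intrinsicInterior_innerDual_range {ι : Type*} [Finite ι] {g : ι → E} {z : E}
    (hz : ∀ j, 0 < ⟪g j, z⟫_ℝ ∨ ⟪g j, z⟫_ℝ = 0 ∧ -g j ∈ closedConeHull (range g)) :
    z ∈ intrinsicInterior ℝ (innerDual (range g) : Set E) := by
  have hmem : z ∈ innerDual (range g) := by
    rintro _ ⟨j, rfl⟩
    exact (hz j).elim le_of_lt fun h => h.1.ge
  refine mem_intrinsicInterior.2 ⟨⟨z, subset_affineSpan ℝ _ hmem⟩, ?_, rfl⟩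
  have hopen : IsOpen (⋂ j ∈ {j | 0 < ⟪g j, z⟫_ℝ}, {w : E | 0 < ⟪g j, w⟫_ℝ}) :=
    (toFinite _).isOpen_biInter fun j _ => isOpen_lt continuous_const (by fun_prop)
  refine mem_interior.2 ⟨Subtype.val ⁻¹' _, ?_, hopen.preimage continuous_subtype_val,
    mem_iInter₂.2 fun j hj => hj⟩
  rintro ⟨w, hw⟩ hwU _ ⟨j, rfl⟩
  rcases hz j with hpos | ⟨-, hneg⟩
  · exact (mem_iInter₂.1 hwU j hpos).le
  have hspan : affineSpan ℝ (innerDual (range g) : Set E) ≤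
      ((innerSL ℝ (g j)).ker).toAffineSubspace := by
    refine affineSpan_le.2 fun v hv => ?_
    have hnonpos : 0 ≤ ⟪v, -g j⟫_ℝ := hneg hv
    rw [inner_neg_right, real_inner_comm] at hnonpos
    exact le_antisymm (neg_nonneg.1 hnonpos) (hv (mem_range_self j))
  exact (hspan hw : ⟪g j, w⟫_ℝ = 0).ge

end RelativeInterior

section StrictConsistency

variable {Ω E τ : Type*} {m : MeasurableSpace Ω} {P : Measure Ω} [IsFiniteMeasure P]
  [NormedAddCommGroup E] [InnerProductSpace ℝ E] [LinearOrder τ] {ℱ : Filtration τ m}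

theorem cancelsReversibly_of_martingale [CompleteSpace E] {K : τ → Ω → ProperCone ℝ E}
    {Z : τ → Ω → E} (hZ : Martingale Z ℱ P)
    (hZK : ∀ t, ∀ᵐ ω ∂P, Z t ω ∈ intrinsicInterior ℝ (innerDual (K t ω : Set E) : Set E))
    (s : Finset τ) :
    CancelsReversibly P (fun t => aeSelections P (ℱ t) fun ω => (K t ω : Set E)) s := by
  intro x hx hsum t ht
  have hxZ : ∀ r ∈ s, ∀ᵐ ω ∂P, 0 ≤ ⟪x r ω, Z r ω⟫_ℝ := fun r hr => by
    filter_upwards [(hx r hr).2, hZK r] with ω hxω hZω using intrinsicInterior_subset hZω hxω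
  obtain ⟨-, hzero⟩ := inner_sum_eq_zero_of_martingale hZ (fun r hr => (hx r hr).1) hxZ
    (u := s.max' ⟨t, ht⟩) s.le_max' <| hsum.mono fun ω hω => by
      rw [← Finset.sum_apply, hω, Pi.zero_apply, inner_zero_left]
  refine ⟨(hx t ht).1.neg, ?_⟩
  filter_upwards [(hx t ht).2, hZK t, hzero t ht] with ω hxω hZω hω
  exact neg_mem_of_mem_intrinsicInterior_innerDual hZω hxω hω

theorem CancelsReversibly.exists_martingale [FiniteDimensional ℝ E] [Fintype τ]
    {ι : Type*} [Finite ι] {g : τ → ι → Ω → E}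
    (hg : ∀ t j, StronglyMeasurable[ℱ t] (g t j))
    (h : CancelsReversibly P (fun t => aeSelections P (ℱ t) fun ω =>
      (closedConeHull (range fun j => g t j ω) : Set E)) Finset.univ) :
    ∃ Z : τ → Ω → E, Martingale Z ℱ P ∧ ∀ t, ∀ᵐ ω ∂P,
      Z t ω ∈ intrinsicInterior ℝ (innerDual (range fun j => g t j ω) : Set E) := by
  set A : τ → Set (Ω → E) := fun t => aeSelections P (ℱ t) fun ω =>
    (closedConeHull (range fun j => g t j ω) : Set E)
  have hA : ∀ t, IsClosedConditionalCone P (ℱ t) (A t) := fun t =>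
    isClosedConditionalCone_aeSelections _
  have hR : IsClosedConditionalCone P ⊥ (aeSum P A Finset.univ) :=
    isClosedConditionalCone_aeSum hA (fun t f hf => hf.1) _ h fun _ _ => bot_le
  have hgm : ∀ k : τ × ι, StronglyMeasurable[ℱ k.1] fun ω => unitScaling (g k.1 k.2 ω) :=
    fun k => continuous_unitScaling.comp_stronglyMeasurable (hg k.1 k.2)
  have hgA : ∀ (k : τ × ι) B, MeasurableSet[ℱ k.1] B →
      B.indicator (fun ω => unitScaling (g k.1 k.2 ω)) ∈ A k.1 := fun k B hB =>
    (hA k.1).indicator_mem ⟨(hgm k).aestronglyMeasurable, ae_of_all _ fun ω =>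
      unitScaling_mem_iff.2 (subset_closedConeHull _ (mem_range_self k.2))⟩ hB
  obtain ⟨Z, hZ⟩ := hR.exists_condExp_separating (fun k : τ × ι => ℱ.le k.1) hgm
    (fun k => .of_bound ((hgm k).mono (ℱ.le k.1)).aestronglyMeasurable 1
      (ae_of_all _ fun _ => norm_unitScaling_le_one _))
    fun k B hB => mem_aeSum_of_mem (fun t => (hA t).zero_mem) (Finset.mem_univ _) (hgA k B hB)
  refine ⟨fun t => P[Z | ℱ t], martingale_condExp _ _ _, fun t => ?_⟩
  have hsign : ∀ j, ∀ᵐ ω ∂P, 0 < ⟪g t j ω, P[Z | ℱ t] ω⟫_ℝ ∨ ⟪g t j ω, P[Z | ℱ t] ω⟫_ℝ = 0 ∧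
      -g t j ω ∈ closedConeHull (range fun j => g t j ω) := fun j => by
    obtain ⟨hnonneg, B, hB, hBR, hpos⟩ := hZ (t, j)
    have hneg := h.neg_mem_of_mem_aeSum ((hA t).add_mem) (Finset.mem_univ t)
      (hgA (t, j) B hB) hBR
    filter_upwards [hnonneg, hneg.2] with ω hω hnegω
    rcases (inner_unitScaling_nonneg_iff.1 hω).lt_or_eq with hlt | heq
    · exact .inl hlt
    have hωB : ω ∈ B := by_contra fun hωB => (inner_unitScaling_pos_iff.1 (hpos ω hωB)).ne heq
    rw [Pi.neg_apply, indicator_of_mem hωB, ← unitScaling_neg] at hnegω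
    exact .inr ⟨heq.symm, unitScaling_mem_iff.1 hnegω⟩
  filter_upwards [ae_all_iff.2 hsign] with ω hω using mem_intrinsicInterior_innerDual_range hω

theorem strictly_consistent_iff_no_arbitrage_increments_general [FiniteDimensional ℝ E]
    [Fintype τ] {ι : Type*} [Finite ι] {g : τ → ι → Ω → E}
    (hg : ∀ t j, StronglyMeasurable[ℱ t] (g t j)) :
    (∃ Z : τ → Ω → E, Martingale Z ℱ P ∧ ∀ t, ∀ᵐ ω ∂P, Z t ω ∈ intrinsicInterior ℝ
        (innerDual (closedConeHull (range fun j => g t j ω) : Set E) : Set E)) ↔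
      CancelsReversibly P (fun t => aeSelections P (ℱ t) fun ω =>
        (closedConeHull (range fun j => g t j ω) : Set E)) Finset.univ := by
  refine ⟨fun ⟨Z, hZ, hZK⟩ => cancelsReversibly_of_martingale hZ hZK _, fun h => ?_⟩
  simpa only [innerDual_closedConeHull] using h.exists_martingale hg

end StrictConsistency

section ContinuousLinearEquiv

variable {Ω E F τ : Type*} {m : MeasurableSpace Ω} {P : Measure Ω} [NormedAddCommGroup E]
  [NormedSpace ℝ E] [NormedAddCommGroup F] [NormedSpace ℝ F]

theorem intrinsicInterior_preimage_continuousLinearEquiv (L : E ≃L[ℝ] F) (s : Set F) :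
    intrinsicInterior ℝ (L ⁻¹' s) = L ⁻¹' intrinsicInterior ℝ s := by
  simpa only [ContinuousLinearEquiv.coe_toContinuousAffineEquiv,
    L.symm.image_eq_preimage_symm, L.symm_symm] using
    L.symm.toContinuousAffineEquiv.intrinsicInterior_image s

theorem martingale_continuousLinearMap_comp [CompleteSpace E] [CompleteSpace F] [Preorder τ]
    {ℱ : Filtration τ m} {Z : τ → Ω → E} (L : E →L[ℝ] F) (hZ : Martingale Z ℱ P) :
    Martingale (fun t => L ∘ Z t) ℱ P :=
  ⟨fun t => L.continuous.comp_stronglyMeasurable (hZ.1 t), fun r t hrt =>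
    (L.comp_condExp_comm (hZ.integrable t)).symm.trans ((hZ.2 r t hrt).fun_comp L)⟩

theorem exists_martingale_mem_preimage_iff [CompleteSpace E] [CompleteSpace F] [Preorder τ]
    {ℱ : Filtration τ m} (L : E ≃L[ℝ] F) {C : τ → Ω → Set F} :
    (∃ Z : τ → Ω → E, Martingale Z ℱ P ∧ ∀ t, ∀ᵐ ω ∂P, Z t ω ∈ L ⁻¹' C t ω) ↔
      ∃ Z : τ → Ω → F, Martingale Z ℱ P ∧ ∀ t, ∀ᵐ ω ∂P, Z t ω ∈ C t ω := by
  refine ⟨fun ⟨Z, hZ, hZC⟩ => ⟨_, martingale_continuousLinearMap_comp (L : E →L[ℝ] F) hZ, hZC⟩,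
    fun ⟨Z, hZ, hZC⟩ => ⟨_, martingale_continuousLinearMap_comp (L.symm : F →L[ℝ] E) hZ, ?_⟩⟩
  simpa using hZC

theorem cancelsReversibly_preimage_iff [Preorder τ] [Fintype τ] {d : ℕ} {ℱ : Filtration τ m}
    (L : E ≃L[ℝ] (Fin d → ℝ)) {K : τ → Ω → Set (Fin d → ℝ)} :
    CancelsReversibly P (fun t => aeSelections P (ℱ t) fun ω => L ⁻¹' K t ω) Finset.univ ↔
      ∀ xs : τ → Ω → Fin d → ℝ, (∀ t, MemL0 P (ℱ t) (fun ω => -K t ω) (xs t)) →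
        (∀ᵐ ω ∂P, ∑ t, xs t ω = 0) → ∀ t, ∀ᵐ ω ∂P, xs t ω ∈ K t ω ∩ -K t ω := by
  constructor
  · intro h xs hxs hsum t
    have hx : ∀ t, (fun ω => -L.symm (xs t ω)) ∈ aeSelections P (ℱ t) fun ω => L ⁻¹' K t ω :=
      fun t => ⟨(L.symm.continuous.neg.comp_stronglyMeasurable
        (hxs t).1.stronglyMeasurable).aestronglyMeasurable, by simpa using (hxs t).2⟩
    have hneg := h _ (fun t _ => hx t) (hsum.mono fun ω hω => by simp [← map_sum, hω]) t (by simp)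
    filter_upwards [hneg.2, (hxs t).2] with ω hω hω' using ⟨by simpa using hω, hω'⟩
  · intro h x hx hsum t _
    choose y hy hxy using fun t => (hx t (Finset.mem_univ t)).1
    have hLy : ∀ t, MemL0 P (ℱ t) (fun ω => -K t ω) fun ω => -L (y t ω) := fun t => by
      refine ⟨(L.continuous.neg.comp_stronglyMeasurable (hy t)).measurable, ?_⟩
      filter_upwards [(hx t (Finset.mem_univ t)).2, hxy t] with ω hω hxyω
      simpa [← hxyω] using hω
    have hsum' : ∀ᵐ ω ∂P, ∑ t, -L (y t ω) = 0 := by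
      filter_upwards [hsum, ae_all_iff.2 hxy] with ω hω hxyω
      simp [← hxyω, ← map_sum, ← Finset.sum_apply, hω]
    refine ⟨(hx t (Finset.mem_univ t)).1.neg, ?_⟩
    filter_upwards [h _ hLy hsum' t, hxy t] with ω hω hxyω
    simpa [hxyω] using hω.1

end ContinuousLinearEquiv

section SolvencyCone

theorem exists_properCone_coe_eq {E : Type*} [NormedAddCommGroup E] [NormedSpace ℝ E] {C : Set E}
    (hne : C.Nonempty) (hclosed : IsClosed C) (hconvex : Convex ℝ C)
    (hsmul : ∀ x ∈ C, ∀ c : ℝ, 0 ≤ c → c • x ∈ C) : ∃ D : ProperCone ℝ E, (D : Set E) = C := by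
  have hadd : ∀ ⦃x y⦄, x ∈ C → y ∈ C → x + y ∈ C := fun x y hx hy => by
    simpa [smul_smul] using hconvex (hsmul x hx 2 zero_le_two) (hsmul y hy 2 zero_le_two)
      one_half_pos.le one_half_pos.le (add_halves 1)
  have hzero : 0 ∈ C := hne.elim fun x hx => by simpa using hsmul x hx 0 le_rfl
  exact ⟨{ carrier := C
           add_mem' := fun hx hy => hadd hx hy
           zero_mem' := hzero
           smul_mem' := fun c x hx => hsmul x hx c c.2
           isClosed' := hclosed }, rfl⟩

variable {d : ℕ}

theorem generatedClosedCone_subset {S : Set (Fin d → ℝ)} {D : ProperCone ℝ (Fin d → ℝ)}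
    (hSD : S ⊆ D) : generatedClosedCone S ⊆ D :=
  fun _ hv => hv _ ⟨hSD, D.isClosed, D.convex, fun _ hx _ hc => D.smul_mem hx hc⟩

theorem closedConeHull_preimage_continuousLinearEquiv {E : Type*} [NormedAddCommGroup E]
    [InnerProductSpace ℝ E] [CompleteSpace E] (L : E ≃L[ℝ] (Fin d → ℝ)) {S : Set (Fin d → ℝ)}
    (hS : S.Nonempty) : (closedConeHull (L ⁻¹' S) : Set E) = L ⁻¹' generatedClosedCone S := by
  refine Subset.antisymm (fun v hv C ⟨hSC, hclosed, hconvex, hsmul⟩ => ?_) fun v hv => ?_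
  · obtain ⟨D, rfl⟩ := exists_properCone_coe_eq (hS.mono hSC) hclosed hconvex hsmul
    have hSD : L ⁻¹' S ⊆ (D.comap L.toContinuousLinearMap : Set E) :=
      fun x hx => ProperCone.mem_comap.2 (hSC hx)
    exact ProperCone.mem_comap.1 (closedConeHull_le hSD hv)
  · have hSD : S ⊆ (closedConeHull (L ⁻¹' S)).comap L.symm.toContinuousLinearMap :=
      fun x hx => ProperCone.mem_comap.2 (subset_closedConeHull _ (by simpa using hx))
    simpa using ProperCone.mem_comap.1 (generatedClosedCone_subset hSD hv)

theorem innerDual_preimage_equiv (K : Set (Fin d → ℝ)) :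
    (innerDual (EuclideanSpace.equiv (Fin d) ℝ ⁻¹' K) : Set (EuclideanSpace ℝ (Fin d))) =
      EuclideanSpace.equiv (Fin d) ℝ ⁻¹' dualCone' K := by
  ext w
  have hinner : ∀ x : EuclideanSpace ℝ (Fin d), ⟪x, w⟫_ℝ = ∑ i, x i * w i := fun x => by
    simp [PiLp.inner_apply, mul_comm]
  simp only [SetLike.mem_coe, mem_innerDual, hinner]
  exact ⟨fun h x hx => h (x := WithLp.toLp 2 x) hx, fun h x hx => h _ hx⟩

/-- The generators of the solvency cone of a bid-ask matrix: the standard basis vectors, followed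
by the exchange vectors `π^{ij} e_i - e_j`. -/
noncomputable def solvencyGenerator (M : Matrix (Fin d) (Fin d) ℝ) :
    Fin d ⊕ Fin d × Fin d → EuclideanSpace ℝ (Fin d) :=
  Sum.elim (EuclideanSpace.single · 1) fun p =>
    M p.1 p.2 • EuclideanSpace.single p.1 1 - EuclideanSpace.single p.2 1

theorem stronglyMeasurable_solvencyGenerator {Ω : Type*} {_ : MeasurableSpace Ω}
    {M : Ω → Matrix (Fin d) (Fin d) ℝ} (hM : ∀ i j, Measurable fun ω => M ω i j) :
    ∀ k, StronglyMeasurable fun ω => solvencyGenerator (M ω) k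
  | .inl _ => stronglyMeasurable_const
  | .inr p => ((hM p.1 p.2).stronglyMeasurable.smul_const _).sub stronglyMeasurable_const

theorem closedConeHull_range_solvencyGenerator (hd : 1 ≤ d) (M : Matrix (Fin d) (Fin d) ℝ) :
    (closedConeHull (range (solvencyGenerator M)) : Set (EuclideanSpace ℝ (Fin d))) =
      EuclideanSpace.equiv (Fin d) ℝ ⁻¹' solvencyCone M := by
  rw [solvencyCone, ← closedConeHull_preimage_continuousLinearEquiv _ ⟨_, .inl ⟨⟨0, hd⟩, rfl⟩⟩]
  congr 2
  ext v
  constructor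
  · rintro ⟨i | ⟨i, j⟩, rfl⟩
    · exact .inl ⟨i, rfl⟩
    · exact .inr ⟨i, j, rfl⟩
  · rintro (⟨i, hi⟩ | ⟨i, j, hij⟩)
    · exact ⟨.inl i, (EuclideanSpace.equiv (Fin d) ℝ).injective hi⟩
    · exact ⟨.inr (i, j), (EuclideanSpace.equiv (Fin d) ℝ).injective hij.symm⟩

end SolvencyCone

/-- The following are equivalent for a bid-ask process: (i) existence of a
strictly consistent price process (a `P`-martingale `Z` with
`Z_t ∈ ri K_t*` a.e.); (ii) whenever `x_t ∈ L⁰(−K_t, 𝔉_t)` satisfy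
`Σ_t x_t = 0` a.s., one has `x_t(ω) ∈ K_t(ω) ∩ (−K_t(ω))` a.e. for every `t`. -/
theorem strictly_consistent_iff_no_arbitrage_increments
    {Ω : Type*} {d T : ℕ} (hd : 1 ≤ d)
    {m : MeasurableSpace Ω} (P : Measure Ω) [IsProbabilityMeasure P]
    (ℱ : Filtration (Fin (T + 1)) m)
    (hcomplete : ∀ t : Fin (T + 1), ∀ s : Set Ω,
      MeasurableSet[m] s → P s = 0 → MeasurableSet[ℱ t] s)
    (Pi_ : Fin (T + 1) → Ω → Matrix (Fin d) (Fin d) ℝ)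
    (hadapted : ∀ t i j, Measurable[ℱ t] fun ω => Pi_ t ω i j)
    (hba : ∀ t ω, IsBidAskMatrix (Pi_ t ω)) :
    (∃ Z : Fin (T + 1) → Ω → Fin d → ℝ,
        Martingale Z ℱ P ∧
        ∀ t, ∀ᵐ ω ∂P, Z t ω ∈
          intrinsicInterior ℝ (dualCone' (solvencyCone (Pi_ t ω)))) ↔
      (∀ xs : Fin (T + 1) → Ω → Fin d → ℝ,
        (∀ t, MemL0 P (ℱ t) (fun ω => -(solvencyCone (Pi_ t ω))) (xs t)) →
        (∀ᵐ ω ∂P, (∑ t, xs t ω) = 0) →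
        ∀ t, ∀ᵐ ω ∂P,
          xs t ω ∈ solvencyCone (Pi_ t ω) ∩ -(solvencyCone (Pi_ t ω))) := by
  rw [← exists_martingale_mem_preimage_iff (EuclideanSpace.equiv (Fin d) ℝ),
    ← cancelsReversibly_preimage_iff (EuclideanSpace.equiv (Fin d) ℝ)]
  simpa only [closedConeHull_range_solvencyGenerator hd, innerDual_preimage_equiv,
    intrinsicInterior_preimage_continuousLinearEquiv] using
    strictly_consistent_iff_no_arbitrage_increments_general (P := P)
      fun t => stronglyMeasurable_solvencyGenerator (hadapted t)
end
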